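/- arXiv:1311.4905 — 5 statements merged into one kernel-verified Lean document; each statement's English description precedes it below -/
import Mathlib

section
/- Let N ≥ 1, let g be an N×N complex unitary matrix, and for β ∈ ℂ set Z(β) := det(I − e^{−β}·g). Then for every integer j ≥ 1 and every β with Re β > 0 (so Z(β) ≠ 0), one has (−1)^j · Z^{(j)}(β)/Z(β) = Σ_{r=1}^{∞} e^{−βr} · H_j^{(r)}(g), the series converging absolutely; here Z^{(j)} denotes the j-th derivative of Z with respect to β. -/
/-!
With `x = e^{-β}` and `θ = x d/dx`, the operator `-d/dβ` becomes `θ`, and `Z(β) = P(x)` for the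
reversed characteristic polynomial `P(x) = det(1 - x g)`. Hence the left-hand side is `θʲP / P`.
The quotients `F_j = θʲP / P` satisfy `F_{j+1} = θF_j + F₁ F_j`, which on coefficients is the
recursion defining `H_j`, and Jacobi's formula gives `F₁ = -∑ Tr(gʳ) xʳ`. So `F_j` is the generating
series of `H_j` as a formal power series. As `θʲP` is a polynomial and `1 / P` is a product of
geometric series, one for each root of `P`, the formal identity converges absolutely wherever
`|x μ| < 1` for all eigenvalues `μ` of `g`; no termwise differentiation is needed.
-/

open Matrix MeasureTheory

noncomputable instance (N : ℕ) : MeasurableSpace (Matrix.unitaryGroup (Fin N) ℂ) := borel _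
instance (N : ℕ) : BorelSpace (Matrix.unitaryGroup (Fin N) ℂ) := ⟨rfl⟩

/- The quantities `H_j^{(n)}(g)`: `H_1^{(n)}(g) = −Tr(g^n)` and, for `j ≥ 2`,
`H_j^{(n)} = Σ_{ℓ+λ=n, ℓ,λ≥1} H_1^{(λ)} H_{j−1}^{(ℓ)} + n·H_{j−1}^{(n)}`
(here `H_1^{(λ)} = −Tr(g^λ)` is inlined in the recursion). -/
noncomputable def matH {N : ℕ} : ℕ → ℕ → Matrix (Fin N) (Fin N) ℂ → ℂ
  | 0, _, _ => 0
  | 1, n, g => -((g ^ n).trace)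
  | (j + 2), n, g =>
      (∑ ℓ ∈ Finset.Ico 1 n, (-((g ^ (n - ℓ)).trace)) * matH (j + 1) ℓ g)
        + (n : ℂ) * matH (j + 1) n g

open scoped PowerSeries Polynomial

section FormalLogDeriv

variable {R : Type*} [CommRing R]

/-- The Euler operator `X · d/dX` on formal power series. Under `x = e^{-β}` it corresponds to
`-d/dβ`. -/
noncomputable def eulerDeriv (R : Type*) [CommRing R] : Derivation R R⟦X⟧ R⟦X⟧ :=
  (PowerSeries.X : R⟦X⟧) • PowerSeries.derivative R

lemma eulerDeriv_apply (f : R⟦X⟧) :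
    eulerDeriv R f = PowerSeries.X * PowerSeries.derivative R f := rfl

lemma coeff_eulerDeriv (f : R⟦X⟧) (n : ℕ) :
    PowerSeries.coeff n (eulerDeriv R f) = n * PowerSeries.coeff n f := by
  rw [eulerDeriv_apply]
  cases n with
  | zero => simp
  | succ n =>
    rw [PowerSeries.coeff_succ_X_mul, PowerSeries.coeff_derivative, mul_comm]
    push_cast
    rfl

lemma coeff_iterate_eulerDeriv (f : R⟦X⟧) (j n : ℕ) :
    PowerSeries.coeff n ((eulerDeriv R)^[j] f) = (n : R) ^ j * PowerSeries.coeff n f := by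
  induction j with
  | zero => simp
  | succ j ih => rw [Function.iterate_succ_apply', coeff_eulerDeriv, ih, pow_succ', mul_assoc]

lemma mul_eq_iterate_eulerDeriv {P : R⟦X⟧} {F : ℕ → R⟦X⟧} (hP : P * F 0 = eulerDeriv R P)
    (hF : ∀ j, F (j + 1) = eulerDeriv R (F j) + F 0 * F j) (j : ℕ) :
    P * F j = (eulerDeriv R)^[j + 1] P := by
  induction j with
  | zero => simpa using hP
  | succ j ih =>
    rw [Function.iterate_succ_apply', ← ih, Derivation.leibniz, ← hP, hF, smul_eq_mul, smul_eq_mul]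
    ring

end FormalLogDeriv

section DetDerivative

variable {R n : Type*} [CommRing R] [Fintype n] [DecidableEq n]

lemma derivative_det_eq_trace_adjugate_mul (M : Matrix n n R[X]) :
    Polynomial.derivative M.det = (M.adjugate * M.map Polynomial.derivative).trace := by
  have hcol (i : n) : (M.adjugate * M.map Polynomial.derivative) i i =
      (M.updateCol i fun k => Polynomial.derivative (M k i)).det := by
    rw [← cramer_apply, cramer_eq_adjugate_mulVec]
    rfl
  simp only [trace, diag_apply, hcol, det_apply]
  rw [Finset.sum_comm, Polynomial.derivative_sum]
  refine Finset.sum_congr rfl fun σ _ => ?_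
  rw [Polynomial.derivative_smul, Polynomial.derivative_prod_finset, Finset.smul_sum]
  refine Finset.sum_congr rfl fun i _ => ?_
  rw [← Finset.mul_prod_erase _ _ (Finset.mem_univ i), updateCol_self, mul_comm]
  congr 2
  exact Finset.prod_congr rfl fun k hk => (updateCol_ne (Finset.ne_of_mem_erase hk)).symm

/-- The formal resolvent `(1 - X g)⁻¹ = ∑ gʳ Xʳ`, as a matrix of power series. -/
noncomputable def resolventSeries (g : Matrix n n R) : Matrix n n R⟦X⟧ :=
  Matrix.of fun i k => PowerSeries.mk fun r => (g ^ r) i k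

lemma one_sub_X_smul_mul_resolventSeries (g : Matrix n n R) :
    (1 - (PowerSeries.X : R⟦X⟧) • g.map PowerSeries.C) * resolventSeries g = 1 := by
  rw [sub_mul, one_mul, smul_mul_assoc]
  ext i k r
  cases r with
  | zero => simp [resolventSeries, one_apply, apply_ite (PowerSeries.coeff 0)]
  | succ r =>
    simp [resolventSeries, one_apply, apply_ite (PowerSeries.coeff (r + 1)), PowerSeries.coeff_one,
      mul_apply, pow_succ']

lemma trace_resolventSeries_mul (g : Matrix n n R) :
    (resolventSeries g * g.map PowerSeries.C).trace =
      PowerSeries.mk fun r => (g ^ (r + 1)).trace := by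
  ext r
  simp [resolventSeries, trace, pow_succ, mul_apply]

lemma mapMatrix_coe_one_sub_X_smul (g : Matrix n n R) :
    (Polynomial.coeToPowerSeries.ringHom (R := R)).mapMatrix
        (1 - (Polynomial.X : R[X]) • g.map Polynomial.C) =
      1 - (PowerSeries.X : R⟦X⟧) • g.map PowerSeries.C := by
  rw [map_sub, map_one, smul_eq_diagonal_mul, smul_eq_diagonal_mul, map_mul]
  congr 2
  · exact (diagonal_map (map_zero _)).trans (by simp)
  · ext; simp

lemma adjugate_one_sub_X_smul (g : Matrix n n R) :
    (1 - (PowerSeries.X : R⟦X⟧) • g.map PowerSeries.C).adjugate =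
      (g.charpolyRev : R⟦X⟧) • resolventSeries g := by
  have hdet : (1 - (PowerSeries.X : R⟦X⟧) • g.map PowerSeries.C).det = g.charpolyRev := by
    rw [← mapMatrix_coe_one_sub_X_smul, ← RingHom.map_det]
    rfl
  calc (1 - (PowerSeries.X : R⟦X⟧) • g.map PowerSeries.C).adjugate
      = (1 - (PowerSeries.X : R⟦X⟧) • g.map PowerSeries.C).adjugate *
          ((1 - (PowerSeries.X : R⟦X⟧) • g.map PowerSeries.C) * resolventSeries g) := by
        rw [one_sub_X_smul_mul_resolventSeries, mul_one]
    _ = (g.charpolyRev : R⟦X⟧) • resolventSeries g := by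
        rw [← mul_assoc, adjugate_mul, hdet, smul_mul_assoc, one_mul]

lemma derivative_charpolyRev (g : Matrix n n R) :
    PowerSeries.derivative R (g.charpolyRev : R⟦X⟧) =
      -(g.charpolyRev * PowerSeries.mk fun r => (g ^ (r + 1)).trace) := by
  let φ : R[X] →+* R⟦X⟧ := Polynomial.coeToPowerSeries.ringHom
  let M : Matrix n n R[X] := 1 - (Polynomial.X : R[X]) • g.map Polynomial.C
  have hderiv : φ.mapMatrix (M.map Polynomial.derivative) = -g.map PowerSeries.C := by
    ext i k
    simp [M, φ, one_apply, apply_ite Polynomial.derivative]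
  calc PowerSeries.derivative R (φ M.det)
      = φ (M.adjugate * M.map Polynomial.derivative).trace := by
        rw [← derivative_det_eq_trace_adjugate_mul]
        exact PowerSeries.derivative_coe _
    _ = (φ.mapMatrix M.adjugate * φ.mapMatrix (M.map Polynomial.derivative)).trace := by
        rw [← map_mul]
        exact AddMonoidHom.map_trace φ _
    _ = -(φ M.det * PowerSeries.mk fun r => (g ^ (r + 1)).trace) := by
        rw [RingHom.map_adjugate, mapMatrix_coe_one_sub_X_smul, adjugate_one_sub_X_smul, hderiv,
          mul_neg, trace_neg, smul_mul_assoc, trace_smul, smul_eq_mul, trace_resolventSeries_mul]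
        rfl

end DetDerivative

section CharpolyRev

variable {R K n : Type*} [CommRing R] [Field K] [Fintype n] [DecidableEq n]

lemma charpolyRev_eval (g : Matrix n n R) (x : R) :
    g.charpolyRev.eval x = (1 - x • g).det := by
  rw [charpolyRev, ← Polynomial.coe_evalRingHom, RingHom.map_det]
  congr 1
  ext i k
  by_cases hik : i = k <;> simp [hik, mul_comm x]

lemma ne_zero_of_isRoot_charpolyRev [Nontrivial R] {g : Matrix n n R} {r : R}
    (hr : g.charpolyRev.IsRoot r) : r ≠ 0 := by
  rintro rfl
  simp [Polynomial.IsRoot] at hr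

lemma inv_mem_spectrum_of_isRoot_charpolyRev {g : Matrix n n K} {r : K}
    (hr : g.charpolyRev.IsRoot r) : r⁻¹ ∈ spectrum K g := by
  have hsmul : algebraMap K (Matrix n n K) r⁻¹ - g = r⁻¹ • (1 - r • g) := by
    rw [smul_sub, inv_smul_smul₀ (ne_zero_of_isRoot_charpolyRev hr), Algebra.algebraMap_eq_smul_one]
  rw [spectrum.mem_iff, isUnit_iff_isUnit_det, hsmul, det_smul, ← charpolyRev_eval, hr.eq_zero]
  simp

open scoped Matrix.Norms.L2Operator in
lemma norm_eq_one_of_mem_spectrum_of_mem_unitaryGroup {g : Matrix n n ℂ}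
    (hg : g ∈ unitaryGroup n ℂ) {μ : ℂ} (hμ : μ ∈ spectrum ℂ g) : ‖μ‖ = 1 :=
  spectrum.norm_eq_one_of_unitary hg hμ

end CharpolyRev

section HasAbsSum

variable {K : Type*} [NormedField K]

/-- The power series `f` converges absolutely at `x`, with sum `a`. -/
structure HasAbsSum (f : K⟦X⟧) (x a : K) : Prop where
  hasSum : HasSum (fun n => PowerSeries.coeff n f * x ^ n) a
  summable_norm : Summable fun n => ‖PowerSeries.coeff n f * x ^ n‖

variable {f f' : K⟦X⟧} {x a a' : K}

lemma HasAbsSum.mul (hf : HasAbsSum f x a) (hf' : HasAbsSum f' x a') :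
    HasAbsSum (f * f') x (a * a') := by
  have hcoeff (n : ℕ) : PowerSeries.coeff n (f * f') * x ^ n =
      ∑ kl ∈ Finset.HasAntidiagonal.antidiagonal n,
        PowerSeries.coeff kl.1 f * x ^ kl.1 * (PowerSeries.coeff kl.2 f' * x ^ kl.2) := by
    rw [PowerSeries.coeff_mul, Finset.sum_mul]
    refine Finset.sum_congr rfl fun kl hkl => ?_
    rw [← Finset.HasAntidiagonal.mem_antidiagonal.mp hkl, pow_add]
    ring
  have hsum := (summable_sum_mul_antidiagonal_of_summable_norm' hf.summable_norm
    hf.hasSum.summable hf'.summable_norm hf'.hasSum.summable).hasSum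
  rw [← tsum_mul_tsum_eq_tsum_sum_antidiagonal_of_summable_norm' hf.summable_norm
    hf.hasSum.summable hf'.summable_norm hf'.hasSum.summable, hf.hasSum.tsum_eq,
    hf'.hasSum.tsum_eq] at hsum
  have hnorm :=
    summable_norm_sum_mul_antidiagonal_of_summable_norm hf.summable_norm hf'.summable_norm
  exact ⟨by simpa only [hcoeff] using hsum, by simpa only [hcoeff] using hnorm⟩

lemma hasAbsSum_sum_of_coeff_eq_zero {s : Finset ℕ} (hs : ∀ n ∉ s, PowerSeries.coeff n f = 0) :
    HasAbsSum f x (∑ n ∈ s, PowerSeries.coeff n f * x ^ n) where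
  hasSum := hasSum_sum_of_ne_finset_zero fun n hn => by simp [hs n hn]
  summable_norm := summable_of_ne_finset_zero (s := s) fun n hn => by simp [hs n hn]

lemma hasAbsSum_C (c x : K) : HasAbsSum (PowerSeries.C c) x c := by
  simpa using hasAbsSum_sum_of_coeff_eq_zero (f := PowerSeries.C c) (x := x) (s := {0})
    fun n hn => by simp_all [PowerSeries.coeff_C]

lemma hasAbsSum_inv_X_sub_C {r : K} (hx : ‖x‖ < ‖r‖) :
    HasAbsSum (PowerSeries.X - PowerSeries.C r)⁻¹ x (x - r)⁻¹ := by
  have hr : r ≠ 0 := norm_pos_iff.mp ((norm_nonneg x).trans_lt hx)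
  have hinv : (PowerSeries.X - PowerSeries.C r)⁻¹ =
      -PowerSeries.invUnitsSub (Units.mk0 r hr) := by
    rw [eq_comm, PowerSeries.eq_inv_iff_mul_eq_one (by simpa using hr), neg_mul_comm, neg_sub]
    exact PowerSeries.invUnitsSub_mul_sub _
  have hq : ‖x / r‖ < 1 := by
    rwa [norm_div, div_lt_one (norm_pos_iff.mpr hr)]
  have hterm (n : ℕ) : PowerSeries.coeff n (PowerSeries.X - PowerSeries.C r)⁻¹ * x ^ n =
      -r⁻¹ * (x / r) ^ n := by
    rw [hinv, map_neg, PowerSeries.coeff_invUnitsSub, divp_eq_div, Units.val_pow_eq_pow_val,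
      Units.val_mk0, div_pow]
    field_simp
    ring
  have hsum : (x - r)⁻¹ = -r⁻¹ * (1 - x / r)⁻¹ := by
    rw [neg_mul, ← mul_inv, ← inv_neg, mul_sub, mul_div_cancel₀ _ hr, mul_one, neg_sub]
  refine ⟨?_, ?_⟩ <;> simp only [hterm]
  · rw [hsum]
    exact (hasSum_geometric_of_norm_lt_one hq).mul_left _
  · simpa only [norm_mul, norm_pow] using
      (summable_geometric_of_lt_one (norm_nonneg _) hq).mul_left ‖-r⁻¹‖

lemma hasAbsSum_inv_multiset_prod {s : Multiset K} (hx : ∀ r ∈ s, ‖x‖ < ‖r‖) :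
    HasAbsSum (s.map fun r => PowerSeries.X - PowerSeries.C r).prod⁻¹ x
      (s.map fun r => x - r).prod⁻¹ := by
  induction s using Multiset.induction_on with
  | empty => simpa using hasAbsSum_C 1 x
  | cons r s ih =>
    rw [Multiset.forall_mem_cons] at hx
    simp only [Multiset.map_cons, Multiset.prod_cons, PowerSeries.mul_inv_rev, _root_.mul_inv_rev]
    exact (ih hx.2).mul (hasAbsSum_inv_X_sub_C hx.1)

lemma hasAbsSum_inv_of_splits {p : K[X]} (hp : p.Splits) (hx : ∀ r ∈ p.roots, ‖x‖ < ‖r‖) :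
    HasAbsSum (p : K⟦X⟧)⁻¹ x (p.eval x)⁻¹ := by
  have hcoe : (p : K⟦X⟧) = PowerSeries.C p.leadingCoeff *
      (p.roots.map fun r => PowerSeries.X - PowerSeries.C r).prod := by
    conv_lhs => rw [hp.eq_prod_roots]
    rw [← Polynomial.coeToPowerSeries.ringHom_apply, map_mul, map_multiset_prod, Multiset.map_map]
    simp [Function.comp_def]
  have heval : p.eval x = p.leadingCoeff * (p.roots.map fun r => x - r).prod := by
    conv_lhs => rw [hp.eq_prod_roots]
    simp [Polynomial.eval_multiset_prod]
  have hC : (PowerSeries.C p.leadingCoeff)⁻¹ = PowerSeries.C p.leadingCoeff⁻¹ := by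
    simp
  rw [hcoe, heval, PowerSeries.mul_inv_rev, _root_.mul_inv_rev, hC]
  exact (hasAbsSum_inv_multiset_prod hx).mul (hasAbsSum_C _ x)

lemma hasAbsSum_inv_charpolyRev [IsAlgClosed K] {n : Type*} [Fintype n] [DecidableEq n]
    {g : Matrix n n K} (hx : ∀ μ ∈ spectrum K g, ‖x * μ‖ < 1) :
    HasAbsSum (g.charpolyRev : K⟦X⟧)⁻¹ x (g.charpolyRev.eval x)⁻¹ := by
  refine hasAbsSum_inv_of_splits (IsAlgClosed.splits _) fun r hr => ?_
  have hroot := Polynomial.isRoot_of_mem_roots hr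
  have hlt := hx _ (inv_mem_spectrum_of_isRoot_charpolyRev hroot)
  rwa [← div_eq_mul_inv, norm_div,
    div_lt_one (norm_pos_iff.mpr (ne_zero_of_isRoot_charpolyRev hroot))] at hlt

end HasAbsSum

section ExponentialSubstitution

lemma iteratedDeriv_eval_cexp_neg (p : ℂ[X]) (j : ℕ) (s : ℂ) :
    iteratedDeriv j (fun s => p.eval (Complex.exp (-s))) s =
      (-1) ^ j * ∑ n ∈ p.support, (n : ℂ) ^ j * p.coeff n * Complex.exp (-s) ^ n := by
  have heval : (fun s => p.eval (Complex.exp (-s))) =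
      fun s => ∑ n ∈ p.support, p.coeff n * Complex.exp (-n * s) := by
    funext s
    rw [Polynomial.eval_eq_sum, Polynomial.sum]
    simp only [← Complex.exp_nat_mul, mul_neg, neg_mul]
  rw [heval, iteratedDeriv_fun_sum fun n _ => by fun_prop, Finset.mul_sum]
  refine Finset.sum_congr rfl fun n _ => ?_
  rw [iteratedDeriv_const_mul_field, iteratedDeriv_cexp_const_mul, ← Complex.exp_nat_mul,
    neg_pow, mul_neg, ← neg_mul]
  ring

lemma hasAbsSum_iterate_eulerDeriv_coe (p : ℂ[X]) (j : ℕ) (s : ℂ) :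
    HasAbsSum ((eulerDeriv ℂ)^[j] (p : ℂ⟦X⟧)) (Complex.exp (-s))
      ((-1) ^ j * iteratedDeriv j (fun s => p.eval (Complex.exp (-s))) s) := by
  convert hasAbsSum_sum_of_coeff_eq_zero (s := p.support) ?_ using 1
  · rw [iteratedDeriv_eval_cexp_neg, ← mul_assoc, ← mul_pow]
    simp [coeff_iterate_eulerDeriv]
  · intro n hn
    simp [coeff_iterate_eulerDeriv, Polynomial.notMem_support_iff.mp hn]

end ExponentialSubstitution

section MatH

variable {N : ℕ}

/-- The generating series `∑_{r ≥ 1} H_j^{(r)}(g) Xʳ`. The factor `X` removes the index `r = 0`,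
where `matH` takes irrelevant values such as `matH 1 0 g = -N`. -/
noncomputable def matHSeries (j : ℕ) (g : Matrix (Fin N) (Fin N) ℂ) : ℂ⟦X⟧ :=
  PowerSeries.X * PowerSeries.mk fun r => matH j (r + 1) g

lemma coeff_zero_matHSeries (j : ℕ) (g : Matrix (Fin N) (Fin N) ℂ) :
    PowerSeries.coeff 0 (matHSeries j g) = 0 :=
  PowerSeries.coeff_zero_X_mul _

lemma coeff_succ_matHSeries (j r : ℕ) (g : Matrix (Fin N) (Fin N) ℂ) :
    PowerSeries.coeff (r + 1) (matHSeries j g) = matH j (r + 1) g := by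
  rw [matHSeries, PowerSeries.coeff_succ_X_mul, PowerSeries.coeff_mk]

lemma charpolyRev_mul_matHSeries_one (g : Matrix (Fin N) (Fin N) ℂ) :
    (g.charpolyRev : ℂ⟦X⟧) * matHSeries 1 g = eulerDeriv ℂ g.charpolyRev := by
  have hneg : matHSeries 1 g =
      -(PowerSeries.X * PowerSeries.mk fun r => (g ^ (r + 1)).trace) := by
    rw [matHSeries, ← mul_neg]
    rfl
  rw [hneg, eulerDeriv_apply, derivative_charpolyRev]
  ring

lemma coeff_matHSeries_one_mul (j r : ℕ) (g : Matrix (Fin N) (Fin N) ℂ) :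
    PowerSeries.coeff r (matHSeries 1 g * matHSeries j g) =
      ∑ l ∈ Finset.Ico 1 r, -(g ^ (r - l)).trace * matH j l g := by
  rw [matHSeries, matHSeries, mul_mul_mul_comm, ← pow_two, PowerSeries.coeff_X_pow_mul']
  split_ifs with hr
  · obtain ⟨m, rfl⟩ := Nat.exists_eq_add_of_le' hr
    rw [Nat.add_sub_cancel, mul_comm, PowerSeries.coeff_mul, Finset.sum_Ico_eq_sum_range,
      Finset.Nat.sum_antidiagonal_eq_sum_range_succ_mk]
    refine Finset.sum_congr rfl fun l hl => ?_
    have hlm : m - l + 1 = m + 2 - (1 + l) := by grind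
    simp only [PowerSeries.coeff_mk, matH, hlm, add_comm 1 l]
    ring
  · rw [Finset.Ico_eq_empty (by omega), Finset.sum_empty]

lemma matHSeries_add_two (j : ℕ) (g : Matrix (Fin N) (Fin N) ℂ) :
    matHSeries (j + 2) g =
      eulerDeriv ℂ (matHSeries (j + 1) g) + matHSeries 1 g * matHSeries (j + 1) g := by
  ext r
  rw [map_add, coeff_eulerDeriv, coeff_matHSeries_one_mul]
  cases r with
  | zero => simp [coeff_zero_matHSeries]
  | succ r => rw [coeff_succ_matHSeries, coeff_succ_matHSeries, matH, add_comm]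

lemma matHSeries_eq_iterate_eulerDeriv_mul_inv (j : ℕ) (g : Matrix (Fin N) (Fin N) ℂ) :
    matHSeries (j + 1) g =
      (eulerDeriv ℂ)^[j + 1] (g.charpolyRev : ℂ⟦X⟧) * (g.charpolyRev : ℂ⟦X⟧)⁻¹ := by
  have hconst : PowerSeries.constantCoeff (g.charpolyRev : ℂ⟦X⟧) ≠ 0 := by
    simp [Polynomial.coeff_zero_eq_eval_zero]
  rw [PowerSeries.eq_mul_inv_iff_mul_eq hconst, mul_comm]
  exact mul_eq_iterate_eulerDeriv (F := fun j => matHSeries (j + 1) g)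
    (charpolyRev_mul_matHSeries_one g) (fun j => matHSeries_add_two j g) j

lemma hasAbsSum_matHSeries {g : Matrix (Fin N) (Fin N) ℂ} {β : ℂ}
    (hβ : ∀ μ ∈ spectrum ℂ g, ‖μ‖ < Real.exp β.re) (j : ℕ) :
    HasAbsSum (matHSeries (j + 1) g) (Complex.exp (-β))
      ((-1) ^ (j + 1) * iteratedDeriv (j + 1) (fun s => (1 - Complex.exp (-s) • g).det) β /
        (1 - Complex.exp (-β) • g).det) := by
  have hspec (μ : ℂ) (hμ : μ ∈ spectrum ℂ g) : ‖Complex.exp (-β) * μ‖ < 1 := by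
    rw [norm_mul, Complex.norm_exp, Complex.neg_re, Real.exp_neg,
      inv_mul_lt_one₀ (Real.exp_pos _)]
    exact hβ μ hμ
  simp only [matHSeries_eq_iterate_eulerDeriv_mul_inv, div_eq_mul_inv, ← charpolyRev_eval]
  exact (hasAbsSum_iterate_eulerDeriv_coe _ _ _).mul (hasAbsSum_inv_charpolyRev hspec)

end MatH

theorem neg_one_pow_iteratedDeriv_det_div_general (N : ℕ) (g : Matrix (Fin N) (Fin N) ℂ)
    (j : ℕ) (hj : 1 ≤ j) (β : ℂ) (hβ : ∀ μ ∈ spectrum ℂ g, ‖μ‖ < Real.exp β.re) :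
    HasSum (fun r : ℕ => Complex.exp (-β * ((r : ℂ) + 1)) * matH j (r + 1) g)
        ((-1 : ℂ) ^ j *
            iteratedDeriv j (fun s : ℂ => Matrix.det (1 - Complex.exp (-s) • g)) β /
          Matrix.det (1 - Complex.exp (-β) • g))
      ∧ Summable (fun r : ℕ => ‖Complex.exp (-β * ((r : ℂ) + 1)) * matH j (r + 1) g‖) := by
  obtain ⟨k, rfl⟩ := Nat.exists_eq_add_of_le' hj
  obtain ⟨hsum, hnorm⟩ := hasAbsSum_matHSeries hβ k
  have hterm (r : ℕ) : Complex.exp (-β * ((r : ℂ) + 1)) * matH (k + 1) (r + 1) g =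
      PowerSeries.coeff (r + 1) (matHSeries (k + 1) g) * Complex.exp (-β) ^ (r + 1) := by
    rw [coeff_succ_matHSeries, ← Complex.exp_nat_mul, mul_comm]
    push_cast
    ring_nf
  simp only [hterm]
  refine ⟨?_, (summable_nat_add_iff 1).mpr hnorm⟩
  simpa [coeff_zero_matHSeries] using (hasSum_nat_add_iff' 1).mpr hsum

/-- Equation (A.4) of Rodgers, "The covariance of almost-primes in F_q[T]":
for `g` unitary, `Z(β) = det(1 − e^{−β} g)`, `j ≥ 1` and `Re β > 0`,
`(−1)^j Z^{(j)}(β)/Z(β) = Σ_{r=1}^∞ e^{−βr} H_j^{(r)}(g)`, converging absolutely. -/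
theorem neg_one_pow_iteratedDeriv_det_div (N : ℕ) (hN : 1 ≤ N)
    (g : Matrix (Fin N) (Fin N) ℂ) (hg : g ∈ Matrix.unitaryGroup (Fin N) ℂ)
    (j : ℕ) (hj : 1 ≤ j) (β : ℂ) (hβ : 0 < β.re) :
    HasSum (fun r : ℕ => Complex.exp (-β * ((r : ℂ) + 1)) * matH j (r + 1) g)
        ((-1 : ℂ) ^ j *
            iteratedDeriv j (fun s : ℂ => Matrix.det (1 - Complex.exp (-s) • g)) β /
          Matrix.det (1 - Complex.exp (-β) • g))
      ∧ Summable (fun r : ℕ => ‖Complex.exp (-β * ((r : ℂ) + 1)) * matH j (r + 1) g‖) := by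
  refine neg_one_pow_iteratedDeriv_det_div_general N g j hj β fun μ hμ => ?_
  rwa [norm_eq_one_of_mem_spectrum_of_mem_unitaryGroup hg hμ, Real.one_lt_exp_iff]
end

section
/- For all integers N ≥ 1, j ≥ 1 and r ≥ 1: ∫_{U(N)} H_j^{(r)}(g) dg = 0, where the integral is with respect to Haar probability measure on U(N). -/
open Matrix MeasureTheory

/-!
The function `H_j^{(r)}` is homogeneous of degree `r`. Translation by a scalar unitary matrix
`z • 1` with `z ^ r = -1` therefore changes its sign while preserving Haar measure.
-/

theorem matH_smul {N : ℕ} (c : ℂ) (g : Matrix (Fin N) (Fin N) ℂ) (j n : ℕ) :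
    matH j n (c • g) = c ^ n * matH j n g := by
  induction j, n, g using matH.induct with
  | case1 n g => simp only [matH, mul_zero]
  | case2 n g => simp only [matH, smul_pow, trace_smul, smul_eq_mul, mul_neg]
  | case3 j n g ih_sum ih_top =>
    have summand_smul (ℓ : ℕ) (hℓ : ℓ ∈ Finset.Ico 1 n) :
        -((c • g) ^ (n - ℓ)).trace * matH (j + 1) ℓ (c • g) =
          c ^ n * (-(g ^ (n - ℓ)).trace * matH (j + 1) ℓ g) := by
      have hℓn : ℓ ≤ n := (Finset.mem_Ico.1 hℓ).2.le
      rw [ih_sum, smul_pow, trace_smul, smul_eq_mul, ← pow_sub_mul_pow c hℓn]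
      ring
    simp only [matH]
    rw [Finset.sum_congr rfl summand_smul, ← Finset.mul_sum, ih_top]
    ring

theorem unitary_zpow_surjective {k : ℤ} (hk : k ≠ 0) :
    Function.Surjective fun z : unitary ℂ ↦ z ^ k := by
  intro w
  have : NeZero k := ⟨hk⟩
  obtain ⟨z, hz⟩ := (Circle.isQuotientCoveringMap_zpow k).surjective
    ⟨w, mem_sphere_zero_iff_norm.2 (CStarRing.norm_coe_unitary w)⟩
  have hz_mem : (z : ℂ) ∈ unitary ℂ := by
    simp [Unitary.mem_iff_self_mul_star, Complex.mul_conj]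
  refine ⟨⟨z, hz_mem⟩, Subtype.ext ?_⟩
  rw [Unitary.coe_zpow]
  exact congrArg Subtype.val hz

theorem integral_eq_zero_of_map_smul_eq_zpow_smul {A E : Type*}
    [Ring A] [StarRing A] [Algebra ℂ A] [StarModule ℂ A]
    [MeasurableSpace (unitary A)] [MeasurableMul (unitary A)]
    [NormedAddCommGroup E] [NormedSpace ℂ E]
    {μ : Measure (unitary A)} [μ.IsMulLeftInvariant]
    {f : unitary A → E} {k : ℤ} (hk : k ≠ 0)
    (hf : ∀ (z : unitary ℂ) (u : unitary A), f (z • u) = (z : ℂ) ^ k • f u) :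
    ∫ u, f u ∂μ = 0 := by
  obtain ⟨z, hz⟩ := unitary_zpow_surjective hk (-1)
  have zpow_eq_neg_one : (z : ℂ) ^ k = -1 := by
    rw [← Unitary.coe_zpow]
    exact congrArg Subtype.val hz
  refine integral_eq_zero_of_mul_left_eq_neg (g := z • (1 : unitary A)) fun u ↦ ?_
  have scalar_mul : z • (1 : unitary A) * u = z • u := Subtype.ext <| smul_one_mul (z : ℂ) (u : A)
  rw [scalar_mul, hf, zpow_eq_neg_one, neg_one_smul]

/-- For all `N, j, r ≥ 1`, `∫_{U(N)} H_j^{(r)}(g) dg = 0` with respect to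
Haar probability measure on `U(N)`. -/
theorem integral_H_eq_zero (N j r : ℕ) (hN : 1 ≤ N) (hj : 1 ≤ j) (hr : 1 ≤ r)
    (μ : Measure (Matrix.unitaryGroup (Fin N) ℂ)) [μ.IsHaarMeasure] [IsProbabilityMeasure μ] :
    ∫ g : Matrix.unitaryGroup (Fin N) ℂ, matH j r (g : Matrix (Fin N) (Fin N) ℂ) ∂μ = 0 := by
  have hr_ne : (r : ℤ) ≠ 0 := Int.natCast_ne_zero.2 (Nat.one_le_iff_ne_zero.1 hr)
  refine integral_eq_zero_of_map_smul_eq_zpow_smul hr_ne fun z g ↦ ?_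
  rw [zpow_natCast, smul_eq_mul]
  exact matH_smul (z : ℂ) (g : Matrix (Fin N) (Fin N) ℂ) j r
end

section
/- For every finite field F_q, every integer j ≥ 1, and every nonzero polynomial f ∈ F_q[T]: Λ_j(f) = Σ'_{d|f} μ(d)·(deg(f/d))^j, where the primed sum runs over the monic divisors d of f. -/
open Polynomial

/-- The von Mangoldt function on `F_q[T]`: `Λ(f) = deg P` if `f = c·P^k` with `c ≠ 0`,
`P` monic irreducible and `k ≥ 1`, and `Λ(f) = 0` otherwise. -/
noncomputable def polyVM {F : Type*} [Field F] (f : F[X]) : ℕ :=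
  sSup {m : ℕ | ∃ (c : F) (P : F[X]) (k : ℕ),
    c ≠ 0 ∧ P.Monic ∧ Irreducible P ∧ 1 ≤ k ∧ f = C c * P ^ k ∧ m = P.natDegree}

/- The higher-order von Mangoldt functions: `Λ_0(f) = 1` iff `f` is a nonzero constant,
`Λ_1 = Λ`, and `Λ_j(f) = Σ'_{d ∣ f} Λ_{j-1}(d) Λ(f/d) + Λ_{j-1}(f)·deg f` for `j ≥ 2`,
the sum being over monic divisors `d` of `f`. -/
open Classical in
noncomputable def polyVMJ {F : Type*} [Field F] : ℕ → F[X] → ℕ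
  | 0 => fun f => if f ≠ 0 ∧ f.natDegree = 0 then 1 else 0
  | 1 => fun f => polyVM f
  | (j + 2) => fun f =>
      (∑ᶠ d ∈ {d : F[X] | d.Monic ∧ d ∣ f}, polyVMJ (j + 1) d * polyVM (f / d))
        + polyVMJ (j + 1) f * f.natDegree

/- The Möbius function on `F_q[T]`: `μ(d) = (−1)^k` if `d = c·P_1⋯P_k` with `c ≠ 0` and
`P_1, …, P_k` distinct monic irreducibles (equivalently, `d` is nonzero and squarefree,
`k` being its number of distinct monic irreducible divisors), and `μ(d) = 0` otherwise. -/
open Classical in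
noncomputable def polyMu {F : Type*} [Field F] (d : F[X]) : ℤ :=
  if d ≠ 0 ∧ Squarefree d then
    (-1) ^ ({P : F[X] | P.Monic ∧ Irreducible P ∧ P ∣ d}.ncard)
  else 0

/-!
`Λ_j` satisfies `Σ_{d ∣ f} Λ_j(d) = (deg f)^j`: for `j = 1` this is the degree of the prime
factorization of `f`, and the recursion for `Λ_{j+1}` multiplies the sum by
`deg (f/d) + deg d = deg f`. Möbius inversion, which rests on `Σ_{d ∣ f} μ(d) = 0` for nonconstant
`f`, then gives `Λ_j` at the monic associate of `f`, where `Λ_j` takes the same value as at `f`.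
-/

section MonicDivisors

variable {F M : Type*} [Field F]

theorem finite_setOf_monic_dvd {f : F[X]} (hf : f ≠ 0) : {d : F[X] | d.Monic ∧ d ∣ f}.Finite :=
  haveI := fintypeSubtypeMonicDvd f hf
  Finite.of_fintype {d : F[X] // d.Monic ∧ d ∣ f}

open Classical in
/-- The finset of monic divisors of a nonzero polynomial, the index set of the primed sums;
the zero polynomial, which has infinitely many, is assigned `∅`. -/
noncomputable def monicDivisors (f : F[X]) : Finset F[X] :=
  if hf : f ≠ 0 then (finite_setOf_monic_dvd hf).toFinset else ∅

theorem mem_monicDivisors {f d : F[X]} (hf : f ≠ 0) :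
    d ∈ monicDivisors f ↔ d.Monic ∧ d ∣ f := by
  simp [monicDivisors, hf]

theorem finsum_mem_monic_dvd [AddCommMonoid M] {f : F[X]} (hf : f ≠ 0) (g : F[X] → M) :
    ∑ᶠ d ∈ {d : F[X] | d.Monic ∧ d ∣ f}, g d = ∑ d ∈ monicDivisors f, g d := by
  rw [← finsum_mem_finset_eq_sum]
  simp only [mem_monicDivisors hf, Set.mem_ofPred_eq]

theorem div_ne_zero_of_dvd {f d : F[X]} (hf : f ≠ 0) (hdf : d ∣ f) : f / d ≠ 0 := by
  obtain ⟨e, rfl⟩ := hdf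
  rw [mul_div_cancel_left₀ e (left_ne_zero_of_mul hf)]
  exact right_ne_zero_of_mul hf

theorem natDegree_div_add_natDegree_of_dvd {f d : F[X]} (hf : f ≠ 0) (hdf : d ∣ f) :
    (f / d).natDegree + d.natDegree = f.natDegree := by
  obtain ⟨e, rfl⟩ := hdf
  have hd := left_ne_zero_of_mul hf
  rw [mul_div_cancel_left₀ e hd, natDegree_mul hd (right_ne_zero_of_mul hf), add_comm]

theorem mem_monicDivisors_and_mem_monicDivisors_div {f d e : F[X]} (hf : f ≠ 0) :
    d ∈ monicDivisors f ∧ e ∈ monicDivisors (f / d) ↔ d.Monic ∧ e.Monic ∧ d * e ∣ f := by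
  by_cases hdf : d.Monic ∧ d ∣ f
  · obtain ⟨hd, g, rfl⟩ := hdf
    have hg := right_ne_zero_of_mul hf
    simp [mem_monicDivisors, mul_div_cancel_left₀ g hd.ne_zero, mul_dvd_mul_iff_left hd.ne_zero,
      hf, hg, hd]
  · rw [mem_monicDivisors hf]
    exact ⟨fun h => absurd h.1 hdf, fun h => absurd ⟨h.1, dvd_of_mul_right_dvd h.2.2⟩ hdf⟩

theorem sum_monicDivisors_comm [AddCommMonoid M] {f : F[X]} (hf : f ≠ 0) (G : F[X] → F[X] → M) :
    ∑ d ∈ monicDivisors f, ∑ e ∈ monicDivisors (f / d), G d e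
      = ∑ e ∈ monicDivisors f, ∑ d ∈ monicDivisors (f / e), G d e := by
  refine Finset.sum_comm' fun d e => ?_
  rw [mem_monicDivisors_and_mem_monicDivisors_div hf, and_comm (a := d ∈ _),
    mem_monicDivisors_and_mem_monicDivisors_div hf, mul_comm e d, and_left_comm]

theorem sum_monicDivisors_sum_div [AddCommMonoid M] {f : F[X]} (hf : f ≠ 0)
    (G : F[X] → F[X] → M) :
    ∑ e ∈ monicDivisors f, ∑ d ∈ monicDivisors e, G d (e / d)
      = ∑ d ∈ monicDivisors f, ∑ e ∈ monicDivisors (f / d), G d e := by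
  have mem_left {e d : F[X]} : e ∈ monicDivisors f ∧ d ∈ monicDivisors e ↔
      (e.Monic ∧ e ∣ f) ∧ d.Monic ∧ d ∣ e := by
    rw [mem_monicDivisors hf]
    exact and_congr_right fun he => mem_monicDivisors he.1.ne_zero
  rw [Finset.sum_sigma', Finset.sum_sigma']
  refine Finset.sum_bij' (fun x _ => ⟨x.2, x.1 / x.2⟩) (fun x _ => ⟨x.1 * x.2, x.1⟩) ?_ ?_ ?_ ?_
    fun _ _ => rfl
  all_goals
    rintro ⟨a, b⟩ hab
    simp only [Finset.mem_sigma, mem_left, mem_monicDivisors_and_mem_monicDivisors_div hf] at hab ⊢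
  · obtain ⟨⟨ha, haf⟩, hb, hba⟩ := hab
    have hmul : b * (a / b) = a := EuclideanDomain.mul_div_cancel' hb.ne_zero hba
    exact ⟨hb, hb.of_mul_monic_left (hmul.symm ▸ ha), hmul.symm ▸ haf⟩
  · obtain ⟨ha, hb, habf⟩ := hab
    exact ⟨⟨ha.mul hb, habf⟩, ha, dvd_mul_right a b⟩
  · rw [EuclideanDomain.mul_div_cancel' hab.2.1.ne_zero hab.2.2]
  · rw [mul_div_cancel_left₀ b hab.1.ne_zero]

end MonicDivisors

section Primes

open UniqueFactorizationMonoid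

variable {F : Type*} [Field F]

theorem eq_of_monic_of_irreducible_of_dvd {P Q : F[X]} (hP : P.Monic) (hPi : Irreducible P)
    (hQ : Q.Monic) (hQi : Irreducible Q) (hPQ : P ∣ Q) : P = Q :=
  eq_of_monic_of_associated hP hQ (hPi.associated_of_dvd hQi hPQ)

theorem eq_and_eq_of_monic_irreducible_pow_eq_pow {P Q : F[X]} {k l : ℕ} (hP : P.Monic)
    (hPi : Irreducible P) (hQ : Q.Monic) (hQi : Irreducible Q) (hk : 1 ≤ k)
    (hpow : P ^ k = Q ^ l) : P = Q ∧ k = l := by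
  have hPQ : P ∣ Q ^ l := hpow ▸ dvd_pow_self P (by lia)
  obtain rfl := eq_of_monic_of_irreducible_of_dvd hP hPi hQ hQi (hPi.prime.dvd_of_dvd_pow hPQ)
  exact ⟨rfl, (pow_inj_of_not_isUnit hPi.not_isUnit hP.ne_zero).1 hpow⟩

theorem mem_primeFactors_iff_monic [DecidableEq F] {f P : F[X]} (hf : f ≠ 0) :
    P ∈ primeFactors f ↔ Irreducible P ∧ P.Monic ∧ P ∣ f := by
  rw [mem_primeFactors, Polynomial.mem_normalizedFactors_iff hf]

theorem natDegree_eq_sum_primeFactors [DecidableEq F] (f : F[X]) :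
    f.natDegree = ∑ P ∈ primeFactors f, (normalizedFactors f).count P * P.natDegree := by
  rcases eq_or_ne f 0 with rfl | hf
  · simp [primeFactors]
  conv_lhs => rw [← leadingCoeff_mul_prod_normalizedFactors f]
  rw [natDegree_C_mul (leadingCoeff_ne_zero.2 hf),
    natDegree_multiset_prod _ (zero_notMem_normalizedFactors f), Finset.sum_multiset_map_count,
    toFinset_normalizedFactors]
  simp only [smul_eq_mul]

theorem pow_dvd_iff_le_count_normalizedFactors [DecidableEq F] {f P : F[X]} {k : ℕ} (hf : f ≠ 0)
    (hP : P.Monic) (hPi : Irreducible P) :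
    P ^ k ∣ f ↔ k ≤ (normalizedFactors f).count P := by
  rw [pow_dvd_iff_le_emultiplicity, emultiplicity_eq_count_normalizedFactors hPi hf,
    hP.normalize_eq_self, Nat.cast_le]

end Primes

section VonMangoldt

open UniqueFactorizationMonoid

variable {F : Type*} [Field F]

theorem polyVM_C_mul_pow {c : F} {P : F[X]} {k : ℕ} (hc : c ≠ 0) (hP : P.Monic)
    (hPi : Irreducible P) (hk : 1 ≤ k) : polyVM (C c * P ^ k) = P.natDegree := by
  refine (congrArg sSup ?_).trans (csSup_singleton P.natDegree)
  refine Set.eq_singleton_iff_unique_mem.2 ⟨⟨c, P, k, hc, hP, hPi, hk, rfl, rfl⟩, ?_⟩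
  rintro m ⟨b, Q, l, hb, hQ, hQi, -, heq, rfl⟩
  have hPQ : P ∣ C b * Q ^ l := heq ▸ (dvd_pow_self P (by lia)).mul_left (C c)
  rw [(isUnit_C.2 hb.isUnit).dvd_mul_left] at hPQ
  rw [eq_of_monic_of_irreducible_of_dvd hP hPi hQ hQi (hPi.prime.dvd_of_dvd_pow hPQ)]

theorem exists_eq_C_mul_pow_of_polyVM_ne_zero {f : F[X]} (hf : polyVM f ≠ 0) :
    ∃ (c : F) (P : F[X]) (k : ℕ),
      c ≠ 0 ∧ P.Monic ∧ Irreducible P ∧ 1 ≤ k ∧ f = C c * P ^ k := by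
  obtain ⟨-, c, P, k, hc, hP, hPi, hk, hfP, -⟩ := Set.nonempty_iff_ne_empty.2 fun hempty =>
    hf ((congrArg sSup hempty).trans csSup_empty)
  exact ⟨c, P, k, hc, hP, hPi, hk, hfP⟩

theorem exists_eq_pow_of_polyVM_ne_zero {f : F[X]} (hfm : f.Monic) (hf : polyVM f ≠ 0) :
    ∃ (P : F[X]) (k : ℕ), P.Monic ∧ Irreducible P ∧ 1 ≤ k ∧ f = P ^ k := by
  obtain ⟨c, P, k, -, hP, hPi, hk, rfl⟩ := exists_eq_C_mul_pow_of_polyVM_ne_zero hf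
  obtain rfl : c = 1 := by simpa [(hP.pow k).leadingCoeff] using hfm.leadingCoeff
  exact ⟨P, k, hP, hPi, hk, by rw [C_1, one_mul]⟩

theorem sum_polyVM {f : F[X]} (hf : f ≠ 0) :
    ∑ d ∈ monicDivisors f, polyVM d = f.natDegree := by
  classical
  let primePowers : Finset (Σ _ : F[X], ℕ) :=
    (primeFactors f).sigma fun P => Finset.Icc 1 ((normalizedFactors f).count P)
  have mem_primePowers {P : F[X]} {k : ℕ} : ⟨P, k⟩ ∈ primePowers ↔
      Irreducible P ∧ P.Monic ∧ 1 ≤ k ∧ P ^ k ∣ f := by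
    rw [Finset.mem_sigma, Finset.mem_Icc, mem_primeFactors_iff_monic hf]
    constructor
    · rintro ⟨⟨hPi, hP, -⟩, hk, hkf⟩
      exact ⟨hPi, hP, hk, (pow_dvd_iff_le_count_normalizedFactors hf hP hPi).2 hkf⟩
    · rintro ⟨hPi, hP, hk, hkf⟩
      exact ⟨⟨hPi, hP, (dvd_pow_self P (by lia)).trans hkf⟩, hk,
        (pow_dvd_iff_le_count_normalizedFactors hf hP hPi).1 hkf⟩
  have sum_primePowers : ∑ x ∈ primePowers, x.1.natDegree = f.natDegree := by
    simp only [primePowers, Finset.sum_sigma, Finset.sum_const, Nat.card_Icc, add_tsub_cancel_right,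
      smul_eq_mul, ← natDegree_eq_sum_primeFactors]
  rw [← sum_primePowers]
  refine (Finset.sum_of_injOn (fun x => x.1 ^ x.2) ?_ ?_ ?_ ?_).symm
  · rintro ⟨P, k⟩ hx ⟨Q, l⟩ hy (heq : P ^ k = Q ^ l)
    obtain ⟨hPi, hP, hk, -⟩ := mem_primePowers.1 hx
    obtain ⟨hQi, hQ, -, -⟩ := mem_primePowers.1 hy
    obtain ⟨rfl, rfl⟩ := eq_and_eq_of_monic_irreducible_pow_eq_pow hP hPi hQ hQi hk heq
    rfl
  · rintro ⟨P, k⟩ hx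
    obtain ⟨-, hP, -, hPf⟩ := mem_primePowers.1 hx
    exact (mem_monicDivisors hf).2 ⟨hP.pow k, hPf⟩
  · intro d hd hd_image
    by_contra hVM
    obtain ⟨hdm, hdf⟩ := (mem_monicDivisors hf).1 hd
    obtain ⟨P, k, hP, hPi, hk, rfl⟩ := exists_eq_pow_of_polyVM_ne_zero hdm hVM
    exact hd_image ⟨⟨P, k⟩, mem_primePowers.2 ⟨hPi, hP, hk, hdf⟩, rfl⟩
  · rintro ⟨P, k⟩ hx
    obtain ⟨hPi, hP, hk, -⟩ := mem_primePowers.1 hx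
    simpa using (polyVM_C_mul_pow one_ne_zero hP hPi hk).symm

theorem polyVMJ_add_one {j : ℕ} (hj : 1 ≤ j) {f : F[X]} (hf : f ≠ 0) :
    polyVMJ (j + 1) f = (∑ d ∈ monicDivisors f, polyVMJ j d * polyVM (f / d))
      + polyVMJ j f * f.natDegree := by
  obtain ⟨i, rfl⟩ := Nat.exists_eq_add_of_le' hj
  exact congrArg (· + _) (finsum_mem_monic_dvd hf _)

theorem sum_polyVMJ {j : ℕ} (hj : 1 ≤ j) {f : F[X]} (hf : f ≠ 0) :
    ∑ d ∈ monicDivisors f, polyVMJ j d = f.natDegree ^ j := by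
  induction j, hj using Nat.le_induction with
  | base => simpa only [polyVMJ, pow_one] using sum_polyVM hf
  | succ j hj ih =>
    calc ∑ d ∈ monicDivisors f, polyVMJ (j + 1) d
      _ = ∑ e ∈ monicDivisors f, ((∑ d ∈ monicDivisors e, polyVMJ j d * polyVM (e / d))
            + polyVMJ j e * e.natDegree) :=
          Finset.sum_congr rfl fun e he =>
            polyVMJ_add_one hj ((mem_monicDivisors hf).1 he).1.ne_zero
      _ = ∑ d ∈ monicDivisors f, ((∑ e ∈ monicDivisors (f / d), polyVMJ j d * polyVM e)
            + polyVMJ j d * d.natDegree) := by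
          rw [Finset.sum_add_distrib,
            sum_monicDivisors_sum_div hf fun d e => polyVMJ j d * polyVM e,
            ← Finset.sum_add_distrib]
      _ = ∑ d ∈ monicDivisors f, polyVMJ j d * f.natDegree :=
          Finset.sum_congr rfl fun d hd => by
            have hdf := ((mem_monicDivisors hf).1 hd).2
            rw [← Finset.mul_sum, sum_polyVM (div_ne_zero_of_dvd hf hdf), ← mul_add,
              natDegree_div_add_natDegree_of_dvd hf hdf]
      _ = f.natDegree ^ (j + 1) := by rw [← Finset.sum_mul, ih, pow_succ]

theorem polyVM_eq_of_associated {f g : F[X]} (hfg : Associated f g) : polyVM f = polyVM g := by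
  have le_of_associated {f g : F[X]} (hfg : Associated f g) : polyVM f ≤ polyVM g := by
    rcases eq_or_ne (polyVM f) 0 with hf | hf
    · simp [hf]
    obtain ⟨c, P, k, hc, hP, hPi, hk, rfl⟩ := exists_eq_C_mul_pow_of_polyVM_ne_zero hf
    obtain ⟨u, rfl⟩ := hfg
    obtain ⟨b, hb, hbu⟩ := isUnit_iff.1 u.isUnit
    rw [← hbu, mul_right_comm, ← C_mul, polyVM_C_mul_pow hc hP hPi hk,
      polyVM_C_mul_pow (mul_ne_zero hc hb.ne_zero) hP hPi hk]
  exact (le_of_associated hfg).antisymm (le_of_associated hfg.symm)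

theorem polyVMJ_eq_of_associated (j : ℕ) {f g : F[X]} (hfg : Associated f g) :
    polyVMJ j f = polyVMJ j g := by
  have hdeg : f.natDegree = g.natDegree :=
    natDegree_eq_of_degree_eq (degree_eq_degree_of_associated hfg)
  match j with
  | 0 => classical exact if_congr (and_congr hfg.ne_zero_iff (by rw [hdeg])) rfl rfl
  | 1 => exact polyVM_eq_of_associated hfg
  | j + 2 =>
    simp only [polyVMJ, hdeg, polyVMJ_eq_of_associated (j + 1) hfg, hfg.dvd_iff_dvd_right]
    congr 1
    refine finsum_mem_congr rfl fun d hd => ?_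
    obtain ⟨hdm, e, rfl⟩ := hd
    obtain ⟨u, rfl⟩ := hfg.symm
    rw [mul_assoc, mul_div_cancel_left₀ _ hdm.ne_zero, mul_div_cancel_left₀ _ hdm.ne_zero,
      polyVM_eq_of_associated (associated_mul_unit_left e _ u.isUnit)]

end VonMangoldt

section Moebius

open UniqueFactorizationMonoid

variable {F M : Type*} [Field F] {S : Finset F[X]}

theorem setOf_monic_irreducible_dvd_prod (hS : ∀ P ∈ S, P.Monic ∧ Irreducible P) :
    {Q : F[X] | Q.Monic ∧ Irreducible Q ∧ Q ∣ ∏ P ∈ S, P} = S := by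
  ext Q
  refine ⟨?_, fun hQ => ⟨(hS Q hQ).1, (hS Q hQ).2, Finset.dvd_prod_of_mem _ hQ⟩⟩
  rintro ⟨hQ, hQi, hQS⟩
  obtain ⟨P, hP, hQP⟩ := (hQi.prime.dvd_finsetProd_iff _).1 hQS
  rwa [eq_of_monic_of_irreducible_of_dvd hQ hQi (hS P hP).1 (hS P hP).2 hQP]

theorem squarefree_prod_of_monic_irreducible (hS : ∀ P ∈ S, P.Monic ∧ Irreducible P) :
    Squarefree (∏ P ∈ S, P) := by
  refine Finset.squarefree_prod_of_pairwise_isCoprime (fun P hP Q hQ hPQ => ?_)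
    fun P hP => (hS P hP).2.squarefree
  exact (hS P hP).2.isRelPrime_iff_not_dvd.2 fun hdvd => hPQ <|
    eq_of_monic_of_irreducible_of_dvd (hS P hP).1 (hS P hP).2 (hS Q hQ).1 (hS Q hQ).2 hdvd

theorem polyMu_prod (hS : ∀ P ∈ S, P.Monic ∧ Irreducible P) :
    polyMu (∏ P ∈ S, P) = (-1) ^ S.card := by
  have hne : ∏ P ∈ S, P ≠ 0 := (monic_prod_of_monic _ _ fun P hP => (hS P hP).1).ne_zero
  rw [polyMu, if_pos ⟨hne, squarefree_prod_of_monic_irreducible hS⟩,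
    setOf_monic_irreducible_dvd_prod hS, Set.ncard_coe_finset]

theorem prod_primeFactors_of_squarefree [DecidableEq F] {d : F[X]} (hd : d.Monic)
    (hsq : Squarefree d) : ∏ P ∈ primeFactors d, P = d := by
  have hmonic : (∏ P ∈ primeFactors d, P).Monic :=
    monic_prod_of_monic _ _ fun P hP => ((mem_primeFactors_iff_monic hd.ne_zero).1 hP).2.1
  -- The product over `primeFactors d` unfolds from `radical d`.
  exact eq_of_monic_of_associated hmonic hd (radical_associated hsq.isRadical hd.ne_zero)

theorem sum_polyMu {f : F[X]} [Decidable (IsUnit f)] (hf : f ≠ 0) :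
    ∑ d ∈ monicDivisors f, polyMu d = if IsUnit f then 1 else 0 := by
  classical
  have monic_irreducible {S : Finset F[X]} (hS : S ⊆ primeFactors f) :
      ∀ P ∈ S, P.Monic ∧ Irreducible P := fun P hP =>
    have hPf := (mem_primeFactors_iff_monic hf).1 (hS hP)
    ⟨hPf.2.1, hPf.1⟩
  have sum_powerset : ∑ S ∈ (primeFactors f).powerset, (-1 : ℤ) ^ S.card
      = ∑ d ∈ monicDivisors f, polyMu d := by
    refine Finset.sum_of_injOn (fun S => ∏ P ∈ S, P) ?_ ?_ ?_ ?_
    · intro S hS T hT (hST : ∏ P ∈ S, P = ∏ P ∈ T, P)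
      rw [Finset.mem_coe, Finset.mem_powerset] at hS hT
      rw [← Finset.coe_inj, ← setOf_monic_irreducible_dvd_prod (monic_irreducible hS), hST,
        setOf_monic_irreducible_dvd_prod (monic_irreducible hT)]
    · intro S hS
      rw [Finset.mem_coe, Finset.mem_powerset] at hS
      refine (mem_monicDivisors hf).2
        ⟨monic_prod_of_monic _ _ fun P hP => (monic_irreducible hS P hP).1, ?_⟩
      exact (Finset.prod_dvd_prod_of_subset _ _ id hS).trans radical_dvd_self
    · intro d hd hd_image
      obtain ⟨hdm, hdf⟩ := (mem_monicDivisors hf).1 hd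
      refine if_neg fun ⟨_, hsq⟩ =>
        hd_image ⟨primeFactors d, ?_, prod_primeFactors_of_squarefree hdm hsq⟩
      rw [Finset.mem_coe, Finset.mem_powerset, ← radical_dvd_iff_primeFactors_subset hf]
      exact radical_dvd_self.trans hdf
    · intro S hS
      exact (polyMu_prod (monic_irreducible (Finset.mem_powerset.1 hS))).symm
  rw [← sum_powerset, Finset.sum_powerset_neg_one_pow_card]
  simp only [primeFactors_eq_empty_iff hf]

theorem isUnit_div_iff_eq_normalize [DecidableEq F] {f e : F[X]} (hf : f ≠ 0) (he : e.Monic)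
    (hef : e ∣ f) : IsUnit (f / e) ↔ e = normalize f := by
  obtain ⟨g, rfl⟩ := hef
  rw [mul_div_cancel_left₀ g he.ne_zero]
  constructor
  · intro hg
    exact eq_of_monic_of_associated he (monic_normalize hf)
      ((associated_mul_unit_right e g hg).trans (associated_normalize _))
  · intro heq
    have hdvd : e * g ∣ e * 1 :=
      (associated_normalize (e * g)).dvd.trans (heq.symm.trans (mul_one e).symm).dvd
    exact isUnit_of_dvd_one ((mul_dvd_mul_iff_left he.ne_zero).1 hdvd)

theorem sum_polyMu_smul_sum_monicDivisors_div [DecidableEq F] [AddCommGroup M] {f : F[X]}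
    (hf : f ≠ 0) (g : F[X] → M) :
    ∑ d ∈ monicDivisors f, polyMu d • ∑ e ∈ monicDivisors (f / d), g e = g (normalize f) := by
  classical
  have inner_sum {e : F[X]} (he : e ∈ monicDivisors f) :
      ∑ d ∈ monicDivisors (f / e), polyMu d = if e = normalize f then 1 else 0 := by
    obtain ⟨hem, hef⟩ := (mem_monicDivisors hf).1 he
    simp only [sum_polyMu (div_ne_zero_of_dvd hf hef), isUnit_div_iff_eq_normalize hf hem hef]
  have normalize_mem : normalize f ∈ monicDivisors f :=
    (mem_monicDivisors hf).2 ⟨monic_normalize hf, normalize_dvd_iff.2 dvd_rfl⟩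
  calc ∑ d ∈ monicDivisors f, polyMu d • ∑ e ∈ monicDivisors (f / d), g e
    _ = ∑ e ∈ monicDivisors f, (∑ d ∈ monicDivisors (f / e), polyMu d) • g e := by
        simp only [Finset.smul_sum, Finset.sum_smul]
        exact sum_monicDivisors_comm hf fun d e => polyMu d • g e
    _ = ∑ e ∈ monicDivisors f, if e = normalize f then g e else 0 :=
        Finset.sum_congr rfl fun e he => by rw [inner_sum he, ite_smul, one_smul, zero_smul]
    _ = g (normalize f) := by rw [Finset.sum_ite_eq', if_pos normalize_mem]

end Moebius

/-- Equation (1.7) of Rodgers, "The covariance of almost-primes in F_q[T]":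
`Λ_j(f) = Σ'_{d ∣ f} μ(d) (deg(f/d))^j`, the sum over monic divisors `d` of `f`. -/
theorem vonMangoldt_eq_sum_moebius_mul_deg_pow {F : Type*} [Field F]
    (j : ℕ) (hj : 1 ≤ j) (f : F[X]) (hf : f ≠ 0) :
    (polyVMJ j f : ℤ)
      = ∑ᶠ d ∈ {d : F[X] | d.Monic ∧ d ∣ f}, polyMu d * ((f / d).natDegree : ℤ) ^ j := by
  classical
  calc (polyVMJ j f : ℤ)
    _ = polyVMJ j (normalize f) := by rw [polyVMJ_eq_of_associated j (associated_normalize f)]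
    _ = ∑ d ∈ monicDivisors f, polyMu d • ∑ e ∈ monicDivisors (f / d), (polyVMJ j e : ℤ) :=
        (sum_polyMu_smul_sum_monicDivisors_div hf fun e => (polyVMJ j e : ℤ)).symm
    _ = ∑ d ∈ monicDivisors f, polyMu d * ((f / d).natDegree : ℤ) ^ j :=
        Finset.sum_congr rfl fun d hd => by
          have hdiv : f / d ≠ 0 := div_ne_zero_of_dvd hf ((mem_monicDivisors hf).1 hd).2
          rw [smul_eq_mul, ← Nat.cast_sum, sum_polyVMJ hj hdiv, Nat.cast_pow]
    _ = ∑ᶠ d ∈ {d : F[X] | d.Monic ∧ d ∣ f}, polyMu d * ((f / d).natDegree : ℤ) ^ j :=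
        (finsum_mem_monic_dvd hf _).symm
end

section
/- Fix N ≥ 1 and work with symmetric polynomials in the variables ω_1, …, ω_N. For all integers j ≥ 1 and r ≥ 1: H_j^{(r)} = Σ_{ν=1}^{min(r,N)} (−1)^ν · (ν^j) · e_ν · h_{r−ν}, where H_j^{(r)} is defined inductively from the power sums as in the context. Equivalently (using e_ν = 0 for ν > N), H_j^{(r)} = Σ_{ν=1}^{r} (−1)^ν ν^j e_ν h_{r−ν}. -/
/-!
Let `E(t) = ∑ (-1)ⁿ eₙ tⁿ = ∏ (1 - ωᵢ t)`, `H(t) = ∑ hₙ tⁿ = 1 / E(t)`, `P(t) = ∑_{n ≥ 1} pₙ tⁿ` and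
`θ = t d/dt`. Newton's identities read `θE = -E P`, hence `θH = P H`. The right-hand side of the
formula is the `r`-th coefficient of `G_j = (θʲE) H`. For `j = 1` this is `-P`, and the Leibniz rule
gives `G_{j+1} = θ(G_j) - (θʲE)(θH) = θ(G_j) - G_j P`, which is the recursion defining `H_j^{(r)}`.
-/

open MvPolynomial

/- The quantities `H_j^{(n)}` as symmetric polynomials in `ω_1, …, ω_N`:
`H_1^{(n)} = −p_n` (the power sum) and, for `j ≥ 2`,
`H_j^{(n)} = Σ_{ℓ+λ=n, ℓ,λ≥1} H_1^{(λ)} H_{j−1}^{(ℓ)} + n·H_{j−1}^{(n)}`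
(here `H_1^{(λ)} = −p_λ` is inlined in the recursion). -/
noncomputable def symH (N : ℕ) : ℕ → ℕ → MvPolynomial (Fin N) ℤ
  | 0, _ => 0
  | 1, n => -(psum (Fin N) ℤ n)
  | (j + 2), n =>
      (∑ ℓ ∈ Finset.Ico 1 n, (-(psum (Fin N) ℤ (n - ℓ))) * symH N (j + 1) ℓ)
        + (n : MvPolynomial (Fin N) ℤ) * symH N (j + 1) n

open scoped PowerSeries

section PowerSeries

variable {A : Type*} [CommSemiring A]

theorem coeff_mul_eq_sum_Icc {f : A⟦X⟧} (hf : PowerSeries.coeff 0 f = 0) (g : A⟦X⟧) (n : ℕ) :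
    PowerSeries.coeff n (f * g) =
      ∑ l ∈ Finset.Icc 1 n, PowerSeries.coeff l f * PowerSeries.coeff (n - l) g := by
  rw [PowerSeries.coeff_mul, Finset.Nat.sum_antidiagonal_eq_sum_range_succ_mk,
    Finset.range_eq_Ico, Finset.sum_eq_sum_Ico_succ_bot n.succ_pos, hf, zero_mul, zero_add,
    zero_add, Nat.succ_eq_add_one, Finset.Ico_add_one_right_eq_Icc]

theorem coeff_mul_eq_sum_Ico {f g : A⟦X⟧} (hf : PowerSeries.coeff 0 f = 0)
    (hg : PowerSeries.coeff 0 g = 0) (n : ℕ) :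
    PowerSeries.coeff n (f * g) =
      ∑ l ∈ Finset.Ico 1 n, PowerSeries.coeff l f * PowerSeries.coeff (n - l) g := by
  rw [coeff_mul_eq_sum_Icc hf]
  refine (Finset.sum_subset Finset.Ico_subset_Icc_self fun l hl hl' => ?_).symm
  obtain rfl : l = n := by grind
  rw [Nat.sub_self, hg, mul_zero]

theorem one_sub_C_mul_X_mul_mk_pow_eq_one {R : Type*} [CommRing R] (a : R) :
    (1 - PowerSeries.C a * PowerSeries.X) * PowerSeries.mk (fun n => a ^ n) = 1 := by
  simpa [PowerSeries.rescale_mk, PowerSeries.rescale_X, mul_comm] using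
    congrArg (PowerSeries.rescale a) (PowerSeries.mk_one_mul_one_sub_eq_one R)

variable (A) in
/-- The Euler operator `θ = t d/dt` on power series in `t`. -/
noncomputable def eulerDerivation : Derivation A A⟦X⟧ A⟦X⟧ :=
  (PowerSeries.X : A⟦X⟧) • PowerSeries.derivative A

theorem coeff_eulerDerivation (f : A⟦X⟧) (n : ℕ) :
    PowerSeries.coeff n (eulerDerivation A f) = n * PowerSeries.coeff n f := by
  rw [eulerDerivation, Derivation.smul_apply, smul_eq_mul]
  cases n with
  | zero => simp
  | succ n =>
    rw [PowerSeries.coeff_succ_X_mul, PowerSeries.coeff_derivative, mul_comm, Nat.cast_succ]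

theorem coeff_eulerDerivation_iterate (f : A⟦X⟧) (j n : ℕ) :
    PowerSeries.coeff n ((eulerDerivation A)^[j] f) = n ^ j * PowerSeries.coeff n f := by
  induction j with
  | zero => simp
  | succ j ih => rw [Function.iterate_succ_apply', coeff_eulerDerivation, ih, pow_succ', mul_assoc]

end PowerSeries

section SymmetricPolynomials

variable (σ R : Type*) [Fintype σ]

theorem esymm_eq_zero_of_card_lt [CommSemiring R] {n : ℕ} (hn : Fintype.card σ < n) :
    esymm σ R n = 0 := by
  rw [esymm, Finset.powersetCard_eq_empty.mpr hn, Finset.sum_empty]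

/-- The generating series `∑ hₙ tⁿ` of the complete homogeneous symmetric polynomials. -/
noncomputable def hsymmSeries [CommSemiring R] [DecidableEq σ] : (MvPolynomial σ R)⟦X⟧ :=
  PowerSeries.mk (hsymm σ R)

theorem hsymm_eq_sum_piAntidiag [CommSemiring R] [DecidableEq σ] (n : ℕ) :
    hsymm σ R n = ∑ l ∈ Finset.piAntidiag Finset.univ n, ∏ i, X i ^ l i := by
  rw [← Finset.map_sym_eq_piAntidiag, Finset.sum_map, Finset.sym_univ, hsymm]
  refine Finset.sum_congr rfl fun s _ => ?_
  rw [Finset.prod_multiset_map_count]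
  refine Finset.prod_subset (Finset.subset_univ _) fun i _ hi => ?_
  rw [Multiset.count_eq_zero.mpr (mt Multiset.mem_toFinset.mpr hi), pow_zero]

theorem hsymmSeries_eq_prod [CommSemiring R] [DecidableEq σ] :
    hsymmSeries σ R = ∏ i, PowerSeries.mk fun n => (X i : MvPolynomial σ R) ^ n := by
  ext1 n
  rw [PowerSeries.coeff_prod, Finset.finsuppAntidiag, Finset.sum_map, hsymmSeries,
    PowerSeries.coeff_mk, hsymm_eq_sum_piAntidiag, ← Finset.sum_attach]
  simp only [PowerSeries.coeff_mk]
  rfl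

/-- The generating series `∑_{n ≥ 1} pₙ tⁿ` of the power sums; the constant term `p₀ = #σ` is
left out. -/
noncomputable def psumSeries [CommSemiring R] : (MvPolynomial σ R)⟦X⟧ :=
  PowerSeries.mk fun n => if n = 0 then 0 else psum σ R n

theorem coeff_zero_psumSeries [CommSemiring R] : PowerSeries.coeff 0 (psumSeries σ R) = 0 := by
  rw [psumSeries, PowerSeries.coeff_mk, if_pos rfl]

theorem coeff_psumSeries [CommSemiring R] {n : ℕ} (hn : n ≠ 0) :
    PowerSeries.coeff n (psumSeries σ R) = psum σ R n := by
  rw [psumSeries, PowerSeries.coeff_mk, if_neg hn]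

variable [CommRing R]

/-- The generating series `∑ (-1)ⁿ eₙ tⁿ` of the elementary symmetric polynomials, with the signs
that make it the inverse of `hsymmSeries`. -/
noncomputable def signedEsymmSeries : (MvPolynomial σ R)⟦X⟧ :=
  PowerSeries.mk fun n => (-1) ^ n * esymm σ R n

theorem signedEsymmSeries_eq_prod :
    signedEsymmSeries σ R = ∏ i, (1 - PowerSeries.C (X i) * PowerSeries.X) := by
  have factor (i : σ) : 1 - PowerSeries.C (X i : MvPolynomial σ R) * PowerSeries.X =
      1 + PowerSeries.monomial 1 (-X i) := by
    rw [sub_eq_add_neg, map_neg, PowerSeries.X_eq, ← PowerSeries.monomial_zero_eq_C_apply,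
      PowerSeries.monomial_mul_monomial, zero_add, mul_one]
  ext1 n
  simp only [factor, Finset.prod_one_add, PowerSeries.prod_monomial, Finset.sum_const, smul_eq_mul,
    mul_one, Finset.prod_neg, map_sum, PowerSeries.coeff_monomial]
  rw [← Finset.sum_filter, signedEsymmSeries, PowerSeries.coeff_mk, esymm,
    Finset.powersetCard_eq_filter, Finset.mul_sum]
  refine Finset.sum_congr (by simp only [eq_comm]) fun t ht => ?_
  rw [(Finset.mem_filter.mp ht).2]

theorem signedEsymmSeries_mul_hsymmSeries [DecidableEq σ] :
    signedEsymmSeries σ R * hsymmSeries σ R = 1 := by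
  rw [signedEsymmSeries_eq_prod, hsymmSeries_eq_prod, ← Finset.prod_mul_distrib]
  exact Finset.prod_eq_one fun i _ => one_sub_C_mul_X_mul_mk_pow_eq_one _

theorem eulerDerivation_signedEsymmSeries :
    eulerDerivation _ (signedEsymmSeries σ R) = -(signedEsymmSeries σ R * psumSeries σ R) := by
  ext1 n
  have newton : (n : MvPolynomial σ R) * ((-1) ^ n * esymm σ R n) =
      -∑ a ∈ Finset.HasAntidiagonal.antidiagonal n with a.1 < n,
        (-1) ^ a.1 * esymm σ R a.1 * psum σ R a.2 := by
    rw [mul_left_comm, mul_esymm_eq_sum, ← mul_assoc, ← pow_add,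
      Odd.neg_one_pow ⟨n, by ring⟩, neg_one_mul]
  rw [coeff_eulerDerivation, map_neg, PowerSeries.coeff_mul]
  simp only [signedEsymmSeries, PowerSeries.coeff_mk]
  rw [newton, Finset.sum_filter]
  refine congrArg Neg.neg (Finset.sum_congr rfl fun a ha => ?_)
  have lt_iff : a.1 < n ↔ a.2 ≠ 0 := by
    grind [Finset.HasAntidiagonal.mem_antidiagonal]
  split_ifs with h
  · rw [coeff_psumSeries _ _ (lt_iff.mp h)]
  · rw [not_not.mp (mt lt_iff.mpr h), coeff_zero_psumSeries, mul_zero]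

variable [DecidableEq σ]

theorem eulerDerivation_hsymmSeries :
    eulerDerivation _ (hsymmSeries σ R) = hsymmSeries σ R * psumSeries σ R := by
  have inverse := signedEsymmSeries_mul_hsymmSeries σ R
  rw [Derivation.leibniz_of_mul_eq_one _ ((mul_comm _ _).trans inverse),
    eulerDerivation_signedEsymmSeries, smul_eq_mul]
  linear_combination hsymmSeries σ R * psumSeries σ R * inverse

/-- The series `(θʲE) H` with `E = signedEsymmSeries` and `H = hsymmSeries`; for `j ≥ 1` it is the
generating series `∑_{n ≥ 1} H_j^{(n)} tⁿ`. -/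
noncomputable def symHSeries (j : ℕ) : (MvPolynomial σ R)⟦X⟧ :=
  (eulerDerivation _)^[j] (signedEsymmSeries σ R) * hsymmSeries σ R

theorem symHSeries_one : symHSeries σ R 1 = -psumSeries σ R := by
  rw [symHSeries, Function.iterate_one, eulerDerivation_signedEsymmSeries]
  linear_combination -psumSeries σ R * signedEsymmSeries_mul_hsymmSeries σ R

theorem symHSeries_succ (j : ℕ) :
    symHSeries σ R (j + 1) =
      -(symHSeries σ R j * psumSeries σ R) + eulerDerivation _ (symHSeries σ R j) := by
  rw [symHSeries, symHSeries, Derivation.leibniz, eulerDerivation_hsymmSeries,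
    Function.iterate_succ_apply', smul_eq_mul, smul_eq_mul]
  ring

variable {j : ℕ}

theorem coeff_symHSeries (hj : j ≠ 0) (n : ℕ) :
    PowerSeries.coeff n (symHSeries σ R j) =
      ∑ ν ∈ Finset.Icc 1 n,
        C ((-1 : R) ^ ν * (ν : R) ^ j) * (esymm σ R ν * hsymm σ R (n - ν)) := by
  rw [symHSeries, coeff_mul_eq_sum_Icc]
  · refine Finset.sum_congr rfl fun ν _ => ?_
    simp only [coeff_eulerDerivation_iterate, signedEsymmSeries, hsymmSeries, PowerSeries.coeff_mk,
      map_mul, map_pow, map_neg, map_one, map_natCast]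
    ring
  · rw [coeff_eulerDerivation_iterate, Nat.cast_zero, zero_pow hj, zero_mul]

theorem coeff_symHSeries_succ (hj : j ≠ 0) (n : ℕ) :
    PowerSeries.coeff n (symHSeries σ R (j + 1)) =
      ∑ l ∈ Finset.Ico 1 n, -psum σ R (n - l) * PowerSeries.coeff l (symHSeries σ R j) +
        n * PowerSeries.coeff n (symHSeries σ R j) := by
  have coeff_zero : PowerSeries.coeff 0 (symHSeries σ R j) = 0 := coeff_symHSeries σ R hj 0
  rw [symHSeries_succ, map_add, map_neg, coeff_eulerDerivation,
    coeff_mul_eq_sum_Ico coeff_zero (coeff_zero_psumSeries σ R), ← Finset.sum_neg_distrib]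
  congr 1
  refine Finset.sum_congr rfl fun l hl => ?_
  have sub_ne_zero : n - l ≠ 0 := Nat.sub_ne_zero_of_lt (Finset.mem_Ico.mp hl).2
  rw [coeff_psumSeries σ R sub_ne_zero, mul_comm, neg_mul]

end SymmetricPolynomials

theorem symH_succ_eq_coeff_symHSeries (N j : ℕ) {n : ℕ} (hn : n ≠ 0) :
    symH N (j + 1) n = PowerSeries.coeff n (symHSeries (Fin N) ℤ (j + 1)) := by
  induction j generalizing n with
  | zero => rw [symH, symHSeries_one, map_neg, coeff_psumSeries _ _ hn]
  | succ j ih =>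
    rw [symH, coeff_symHSeries_succ _ _ j.succ_ne_zero, ih hn]
    congr 1
    refine Finset.sum_congr rfl fun l hl => ?_
    rw [ih (Nat.one_le_iff_ne_zero.mp (Finset.mem_Ico.mp hl).1)]

/-- Equation (A.6) of Rodgers, "The covariance of almost-primes in F_q[T]":
`H_j^{(r)} = Σ_{ν=1}^{min(r,N)} (−1)^ν ν^j e_ν h_{r−ν}`, and equivalently
(since `e_ν = 0` for `ν > N`) `H_j^{(r)} = Σ_{ν=1}^{r} (−1)^ν ν^j e_ν h_{r−ν}`. -/
theorem symH_eq_sum_esymm_mul_hsymm (N j r : ℕ) (hN : 1 ≤ N) (hj : 1 ≤ j) (hr : 1 ≤ r) :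
    symH N j r
      = ∑ ν ∈ Finset.Icc 1 (min r N),
          C ((-1 : ℤ) ^ ν * (ν : ℤ) ^ j) * (esymm (Fin N) ℤ ν * hsymm (Fin N) ℤ (r - ν))
    ∧ symH N j r
      = ∑ ν ∈ Finset.Icc 1 r,
          C ((-1 : ℤ) ^ ν * (ν : ℤ) ^ j) * (esymm (Fin N) ℤ ν * hsymm (Fin N) ℤ (r - ν)) := by
  have sum_to_r : symH N j r = ∑ ν ∈ Finset.Icc 1 r,
      C ((-1 : ℤ) ^ ν * (ν : ℤ) ^ j) * (esymm (Fin N) ℤ ν * hsymm (Fin N) ℤ (r - ν)) := by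
    obtain ⟨j, rfl⟩ := Nat.exists_eq_add_of_le' hj
    rw [symH_succ_eq_coeff_symHSeries N j (Nat.one_le_iff_ne_zero.mp hr),
      coeff_symHSeries _ _ j.succ_ne_zero]
  refine ⟨sum_to_r.trans (Finset.sum_subset ?_ fun ν hν hν' => ?_).symm, sum_to_r⟩
  · exact Finset.Icc_subset_Icc_right (min_le_left r N)
  · have card_lt : Fintype.card (Fin N) < ν := by grind [Fintype.card_fin]
    rw [esymm_eq_zero_of_card_lt _ _ card_lt, zero_mul, mul_zero]
end

section
/- Let F_q be a finite field with q elements, and let j, k ≥ 1 and n > h ≥ 0 be integers. Then Σ_{f ∈ M_n} Ψ̃_j^♮(f;h) · Ψ̃_k^♮(f;h) = (q^{h+1}/(q−1)) · Σ_{(g_1,g_2) ∈ P_n^♮ × P_n^♮, g_1 ≡ g_2 mod T^{n−h}} Λ̃_j^♮(g_1) · Λ̃_k^♮(g_2). -/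
open Polynomial

/-- `M_m^♮`, the set of monic polynomials of degree `m` with nonzero constant term. -/
def monicSharp (F : Type*) [Field F] (m : ℕ) : Set (Polynomial F) :=
  {f | f.Monic ∧ f.natDegree = m ∧ f.coeff 0 ≠ 0}

/-- `E_j^♮(m) = (1/|M_m^♮|) Σ_{f ∈ M_m^♮} Λ_j(f)`. -/
noncomputable def Esharp (F : Type*) [Field F] (j m : ℕ) : ℝ :=
  (∑ᶠ f ∈ monicSharp F m, (polyVMJ j f : ℝ)) / ((monicSharp F m).ncard : ℝ)

/-- `Λ̃_j^♮(f) = Λ_j(f) − E_j^♮(deg f)`. -/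
noncomputable def lamSharp {F : Type*} [Field F] (j : ℕ) (f : F[X]) : ℝ :=
  (polyVMJ j f : ℝ) - Esharp F j f.natDegree

/-- `Ψ̃_j^♮(f;h) = Σ_{g ∈ M_n^♮, deg(f−g) ≤ h} Λ̃_j^♮(g)` for `f` of degree `n`
(the zero polynomial has degree `⊥ ≤ h`). -/
noncomputable def psiSharp {F : Type*} [Field F] (j : ℕ) (f : F[X]) (h : ℕ) : ℝ :=
  ∑ᶠ g ∈ {g : F[X] | g ∈ monicSharp F f.natDegree ∧ (f - g).degree ≤ (h : WithBot ℕ)},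
    lamSharp j g

/-!
Reversal `f ↦ T ^ deg f * f(1 / T)` turns agreement of the top coefficients of two polynomials of
degree `n`, `deg (f - g) ≤ h`, into congruence modulo `T ^ (n - h)`. It is multiplicative and, on
polynomials with nonzero constant term, an involution preserving the degree. Since `Λ_j` depends
only on degrees and factorisations up to scalars, it is invariant under reversal and under scalars.

Expanding the product of two short interval sums, each pair of monic polynomials at distance at
most `h` is counted once for every centre close to both of them, that is `q ^ (h + 1)` times.
Scaling by the `q - 1` units of the field spreads these monic pairs over all close pairs, and
reversal then turns close pairs into congruent ones.
-/

section Reverse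

variable {R : Type*}

lemma natDegree_reverse_of_coeff_zero_ne_zero [Semiring R] {f : R[X]} (hf : f.coeff 0 ≠ 0) :
    f.reverse.natDegree = f.natDegree := by
  rw [reverse_natDegree, natTrailingDegree_eq_zero.2 (Or.inr hf), Nat.sub_zero]

lemma reverse_reverse_of_coeff_zero_ne_zero [Semiring R] {f : R[X]} (hf : f.coeff 0 ≠ 0) :
    f.reverse.reverse = f := by
  ext i
  rw [coeff_reverse, natDegree_reverse_of_coeff_zero_ne_zero hf, coeff_reverse, revAt_invol]

lemma coeff_zero_reverse_ne_zero [Semiring R] {f : R[X]} (hf : f ≠ 0) :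
    f.reverse.coeff 0 ≠ 0 := by
  rwa [coeff_zero_reverse, leadingCoeff_ne_zero]

lemma ne_zero_of_coeff_zero_ne_zero [Semiring R] {f : R[X]} (hf : f.coeff 0 ≠ 0) : f ≠ 0 := by
  rintro rfl
  exact hf (coeff_zero 0)

lemma coeff_zero_ne_zero_of_dvd [Semiring R] {d f : R[X]} (hd : d ∣ f) (hf : f.coeff 0 ≠ 0) :
    d.coeff 0 ≠ 0 := by
  obtain ⟨e, rfl⟩ := hd
  exact left_ne_zero_of_mul (mul_coeff_zero d e ▸ hf)

/-- Reversal of polynomials `f ↦ X ^ deg f * f(1 / X)` as a multiplicative homomorphism. -/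
noncomputable def reverseHom (R : Type*) [Semiring R] [NoZeroDivisors R] : R[X] →* R[X] where
  toFun := reverse
  map_one' := by simpa using reverse_C (1 : R)
  map_mul' := reverse_mul_of_domain

lemma isUnit_of_isUnit_reverse [Semiring R] [NoZeroDivisors R] {f : R[X]}
    (hf : f.coeff 0 ≠ 0) (hu : IsUnit f.reverse) : IsUnit f :=
  reverse_reverse_of_coeff_zero_ne_zero hf ▸ hu.map (reverseHom R)

lemma irreducible_reverse [Semiring R] [NoZeroDivisors R] {f : R[X]} (hf : Irreducible f)
    (hf₀ : f.coeff 0 ≠ 0) : Irreducible f.reverse := by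
  refine ⟨fun hu ↦ hf.not_isUnit (isUnit_of_isUnit_reverse hf₀ hu), fun a b hab ↦ ?_⟩
  have hab₀ : a.coeff 0 * b.coeff 0 ≠ 0 := by
    rw [← mul_coeff_zero, ← hab]
    exact coeff_zero_reverse_ne_zero (ne_zero_of_coeff_zero_ne_zero hf₀)
  have hf_eq : f = a.reverse * b.reverse := by
    rw [← reverse_mul_of_domain, ← hab, reverse_reverse_of_coeff_zero_ne_zero hf₀]
  exact (hf.isUnit_or_isUnit hf_eq).imp (isUnit_of_isUnit_reverse (left_ne_zero_of_mul hab₀))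
    (isUnit_of_isUnit_reverse (right_ne_zero_of_mul hab₀))

lemma X_pow_sub_dvd_reflect_iff [Semiring R] {f : R[X]} {n : ℕ} (hf : f.natDegree ≤ n) (h : ℕ) :
    X ^ (n - h) ∣ f.reflect n ↔ f.degree ≤ h := by
  simp only [X_pow_dvd_iff, degree_le_iff_coeff_zero, coeff_reflect, Nat.cast_lt]
  constructor
  · intro H m hm
    rcases le_or_gt m n with hmn | hnm
    · simpa [Nat.sub_sub_self hmn] using H (n - m) (by lia)
    · exact coeff_eq_zero_of_natDegree_lt (hf.trans_lt hnm)
  · intro H d hd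
    rw [revAt_le (by lia)]
    exact H (n - d) (by lia)

lemma X_pow_sub_dvd_reverse_sub_reverse_iff [Ring R] {f g : R[X]} {n : ℕ}
    (hf : f.natDegree = n) (hg : g.natDegree = n) (h : ℕ) :
    X ^ (n - h) ∣ f.reverse - g.reverse ↔ (f - g).degree ≤ h := by
  rw [reverse, reverse, hf, hg, ← reflect_sub]
  exact X_pow_sub_dvd_reflect_iff (max_self n ▸ natDegree_sub_le_of_le hf.le hg.le) h

end Reverse

section Associated

lemma associated_div_div {R : Type*} [EuclideanDomain R] {a b c d : R} (hab : Associated a b)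
    (hcd : Associated c d) (hc : c ≠ 0) (hca : c ∣ a) : Associated (a / c) (b / d) := by
  have hdb : d ∣ b := (hcd.dvd_iff_dvd_left.1 hca).trans hab.dvd
  refine Associated.of_mul_left ?_ hcd hc
  rwa [EuclideanDomain.mul_div_cancel' hc hca,
    EuclideanDomain.mul_div_cancel' (hcd.ne_zero_iff.1 hc) hdb]

variable {F : Type*} [Field F]

lemma associated_C_mul_left {c : F} (hc : c ≠ 0) (f : F[X]) : Associated (C c * f) f :=
  associated_unit_mul_left f (C c) (isUnit_C.2 hc.isUnit)

lemma exists_eq_C_mul_of_associated {f g : F[X]} (hfg : Associated f g) :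
    ∃ c : F, c ≠ 0 ∧ g = C c * f := by
  obtain ⟨u, rfl⟩ := hfg
  obtain ⟨c, hc, hcu⟩ := Polynomial.isUnit_iff.1 u.isUnit
  exact ⟨c, hc.ne_zero, by rw [hcu, mul_comm]⟩

lemma natDegree_eq_of_associated {f g : F[X]} (hfg : Associated f g) :
    f.natDegree = g.natDegree :=
  natDegree_eq_of_degree_eq (degree_eq_degree_of_associated hfg)

/-- The monic multiple of the reversal of a polynomial with nonzero constant term. -/
noncomputable def monicReverse (f : F[X]) : F[X] := C (f.coeff 0)⁻¹ * f.reverse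

lemma monicReverse_associated {f : F[X]} (hf : f.coeff 0 ≠ 0) :
    Associated (monicReverse f) f.reverse :=
  associated_C_mul_left (inv_ne_zero hf) _

lemma monic_monicReverse {f : F[X]} (hf : f.coeff 0 ≠ 0) : (monicReverse f).Monic := by
  rw [Monic, monicReverse, leadingCoeff_mul, leadingCoeff_C, reverse_leadingCoeff,
    trailingCoeff_eq_coeff_zero hf, inv_mul_cancel₀ hf]

lemma monicReverse_dvd_reverse {d f : F[X]} (hd : d ∣ f) (hf : f.coeff 0 ≠ 0) :
    monicReverse d ∣ f.reverse :=
  (monicReverse_associated (coeff_zero_ne_zero_of_dvd hd hf)).dvd.trans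
    ((reverseHom F).map_dvd hd)

lemma associated_reverse_div_monicReverse {d f : F[X]} (hd : d ∣ f) (hf : f.coeff 0 ≠ 0) :
    Associated (f.reverse / monicReverse d) (f / d).reverse := by
  obtain ⟨e, rfl⟩ := hd
  have hd₀ : d.coeff 0 ≠ 0 := coeff_zero_ne_zero_of_dvd (dvd_mul_right d e) hf
  have hd_ne : d ≠ 0 := ne_zero_of_coeff_zero_ne_zero hd₀
  calc
    Associated ((d * e).reverse / monicReverse d) ((d * e).reverse / d.reverse) :=
      associated_div_div (.refl _) (monicReverse_associated hd₀) (monic_monicReverse hd₀).ne_zero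
        (monicReverse_dvd_reverse (dvd_mul_right d e) hf)
    _ = e.reverse := by
      rw [reverse_mul_of_domain, mul_div_cancel_left₀ _ (reverse_eq_zero.not.2 hd_ne)]
    _ = (d * e / d).reverse := by rw [mul_div_cancel_left₀ _ hd_ne]

lemma coeff_zero_monicReverse_ne_zero {f : F[X]} (hf : f.coeff 0 ≠ 0) :
    (monicReverse f).coeff 0 ≠ 0 :=
  coeff_zero_ne_zero_of_dvd (monicReverse_associated hf).dvd
    (coeff_zero_reverse_ne_zero (ne_zero_of_coeff_zero_ne_zero hf))

lemma monicReverse_monicReverse {f : F[X]} (hm : f.Monic) (hf : f.coeff 0 ≠ 0) :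
    monicReverse (monicReverse f) = f := by
  have hf' := coeff_zero_monicReverse_ne_zero hf
  refine eq_of_monic_of_associated (monic_monicReverse hf') hm ?_
  calc
    Associated (monicReverse (monicReverse f)) (monicReverse f).reverse :=
      monicReverse_associated hf'
    Associated _ f.reverse.reverse := (monicReverse_associated hf).map (reverseHom F)
    _ = f := reverse_reverse_of_coeff_zero_ne_zero hf

lemma bijOn_monicReverse_monic_dvd {f : F[X]} (hf : f.coeff 0 ≠ 0) :
    Set.BijOn monicReverse {d | d.Monic ∧ d ∣ f} {d | d.Monic ∧ d ∣ f.reverse} := by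
  have maps {g : F[X]} (hg : g.coeff 0 ≠ 0) :
      Set.MapsTo monicReverse {d | d.Monic ∧ d ∣ g} {d | d.Monic ∧ d ∣ g.reverse} :=
    fun d hd ↦ ⟨monic_monicReverse (coeff_zero_ne_zero_of_dvd hd.2 hg),
      monicReverse_dvd_reverse hd.2 hg⟩
  have leftInv {g : F[X]} (hg : g.coeff 0 ≠ 0) :
      Set.LeftInvOn monicReverse monicReverse {d | d.Monic ∧ d ∣ g} :=
    fun d hd ↦ monicReverse_monicReverse hd.1 (coeff_zero_ne_zero_of_dvd hd.2 hg)
  have hf' := coeff_zero_reverse_ne_zero (ne_zero_of_coeff_zero_ne_zero hf)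
  refine Set.InvOn.bijOn ⟨leftInv hf, leftInv hf'⟩ (maps hf) ?_
  simpa only [reverse_reverse_of_coeff_zero_ne_zero hf] using maps hf'

end Associated

/-- A function of polynomials is reversal invariant if it takes equal values on associated
polynomials and on `f` and `X ^ deg f * f(1 / X)` whenever `f(0) ≠ 0`. -/
structure IsReversalInvariant {F α : Type*} [Field F] (u : F[X] → α) : Prop where
  associated : ∀ ⦃f g : F[X]⦄, Associated f g → u f = u g
  reverse : ∀ ⦃f : F[X]⦄, f.coeff 0 ≠ 0 → u f.reverse = u f

/-- The Dirichlet convolution of functions of polynomials, over monic divisors. -/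
noncomputable def monicConvolution {F M : Type*} [Field F] [AddCommMonoid M] [Mul M]
    (u v : F[X] → M) (f : F[X]) : M :=
  ∑ᶠ d ∈ {d : F[X] | d.Monic ∧ d ∣ f}, u d * v (f / d)

section IsReversalInvariant

variable {F : Type*} [Field F]

lemma isReversalInvariant_natDegree : IsReversalInvariant (natDegree : F[X] → ℕ) where
  associated _ _ := natDegree_eq_of_associated
  reverse _ := natDegree_reverse_of_coeff_zero_ne_zero

lemma isReversalInvariant_ne_zero : IsReversalInvariant (fun f : F[X] ↦ f ≠ 0) where
  associated _ _ hfg := propext hfg.ne_zero_iff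
  reverse _ _ := propext reverse_eq_zero.not

lemma IsReversalInvariant.comp₂ {α β γ : Type*} {u : F[X] → α} {v : F[X] → β}
    (hu : IsReversalInvariant u) (hv : IsReversalInvariant v) (φ : α → β → γ) :
    IsReversalInvariant fun f ↦ φ (u f) (v f) where
  associated _ _ hfg := congrArg₂ φ (hu.associated hfg) (hv.associated hfg)
  reverse _ hf := congrArg₂ φ (hu.reverse hf) (hv.reverse hf)

lemma IsReversalInvariant.monicConvolution {M : Type*} [AddCommMonoid M] [Mul M]
    {u v : F[X] → M} (hu : IsReversalInvariant u) (hv : IsReversalInvariant v) :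
    IsReversalInvariant (monicConvolution u v) where
  associated f g hfg := by
    refine finsum_mem_congr (Set.ext fun d ↦ and_congr_right' hfg.dvd_iff_dvd_right) ?_
    rintro d ⟨hm, hd⟩
    rw [hv.associated (associated_div_div hfg (.refl d) hm.ne_zero
      (hfg.dvd_iff_dvd_right.2 hd))]
  reverse f hf := by
    refine (finsum_mem_eq_of_bijOn _ (bijOn_monicReverse_monic_dvd hf) ?_).symm
    rintro d ⟨-, hd⟩
    have hd₀ := coeff_zero_ne_zero_of_dvd hd hf
    have hu_eq : u (monicReverse d) = u d := by
      rw [hu.associated (monicReverse_associated hd₀), hu.reverse hd₀]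
    have hv_eq : v (f.reverse / monicReverse d) = v (f / d) := by
      rw [hv.associated (associated_reverse_div_monicReverse hd hf), hv.reverse
        (coeff_zero_ne_zero_of_dvd (EuclideanDomain.div_dvd_of_dvd hd) hf)]
    rw [hu_eq, hv_eq]

end IsReversalInvariant

section VonMangoldt

variable {F : Type*} [Field F]

lemma polyVM_eq_sSup_associated (f : F[X]) :
    polyVM f = sSup {m | ∃ (P : F[X]) (k : ℕ), Irreducible P ∧ 1 ≤ k ∧ Associated (P ^ k) f ∧
      m = P.natDegree} := by
  classical
  unfold polyVM
  congr 1
  ext m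
  constructor
  · rintro ⟨c, P, k, hc, -, hP, hk, rfl, rfl⟩
    exact ⟨P, k, hP, hk, (associated_C_mul_left hc _).symm, rfl⟩
  · rintro ⟨P, k, hP, hk, hPf, rfl⟩
    have hPn : Associated (normalize P) P := normalize_associated P
    obtain ⟨c, hc, hf⟩ := exists_eq_C_mul_of_associated (hPn.pow_pow.trans hPf)
    exact ⟨c, normalize P, k, hc, monic_normalize hP.ne_zero, hPn.symm.irreducible hP, hk, hf,
      (natDegree_eq_of_associated hPn).symm⟩

lemma isReversalInvariant_polyVM : IsReversalInvariant (polyVM : F[X] → ℕ) where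
  associated f g hfg := by
    have key (P : F[X]) (k : ℕ) : Associated (P ^ k) f ↔ Associated (P ^ k) g :=
      ⟨fun hP ↦ hP.trans hfg, fun hP ↦ hP.trans hfg.symm⟩
    simp only [polyVM_eq_sSup_associated, key]
  reverse f hf := by
    have reverse_mem {g : F[X]} (hg : g.coeff 0 ≠ 0) {m : ℕ}
        (hm : ∃ (P : F[X]) (k : ℕ), Irreducible P ∧ 1 ≤ k ∧ Associated (P ^ k) g ∧
          m = P.natDegree) :
        ∃ (P : F[X]) (k : ℕ), Irreducible P ∧ 1 ≤ k ∧ Associated (P ^ k) g.reverse ∧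
          m = P.natDegree := by
      obtain ⟨P, k, hP, hk, hPg, rfl⟩ := hm
      have hP₀ : P.coeff 0 ≠ 0 :=
        coeff_zero_ne_zero_of_dvd ((dvd_pow_self P (by lia)).trans hPg.dvd) hg
      refine ⟨P.reverse, k, irreducible_reverse hP hP₀, hk, ?_,
        (natDegree_reverse_of_coeff_zero_ne_zero hP₀).symm⟩
      exact map_pow (reverseHom F) P k ▸ hPg.map (reverseHom F)
    rw [polyVM_eq_sSup_associated, polyVM_eq_sSup_associated]
    congr 1
    ext m
    refine ⟨fun hm ↦ ?_, reverse_mem hf⟩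
    exact reverse_reverse_of_coeff_zero_ne_zero hf ▸
      reverse_mem (coeff_zero_reverse_ne_zero (ne_zero_of_coeff_zero_ne_zero hf)) hm

lemma isReversalInvariant_polyVMJ : ∀ j : ℕ, IsReversalInvariant (polyVMJ j : F[X] → ℕ)
  | 0 => by
    classical
    convert isReversalInvariant_ne_zero.comp₂ (F := F) isReversalInvariant_natDegree
      fun p d ↦ if p ∧ d = 0 then 1 else 0 with f
    simp only [polyVMJ]
    congr
  | 1 => by
    convert isReversalInvariant_polyVM (F := F) with f
    rw [polyVMJ]
  | j + 2 => by
    have ih := isReversalInvariant_polyVMJ (j + 1)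
    convert (ih.monicConvolution isReversalInvariant_polyVM).comp₂
      (ih.comp₂ isReversalInvariant_natDegree (· * ·)) (· + ·) with f
    rw [polyVMJ, monicConvolution]

lemma isReversalInvariant_lamSharp (j : ℕ) : IsReversalInvariant (lamSharp j : F[X] → ℝ) :=
  (isReversalInvariant_polyVMJ j).comp₂ isReversalInvariant_natDegree
    fun m d ↦ (m : ℝ) - Esharp F j d

end VonMangoldt

section Sums

lemma finset_sum_sum_mul_sum_of_equivalence {α R : Type*} [NonUnitalNonAssocSemiring R]
    {r : α → α → Prop} [DecidableRel r] (hr : Equivalence r) {s t : Finset α} {N : ℕ}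
    (hN : ∀ a ∈ t, (s.filter fun f ↦ r f a).card = N) (u v : α → R) :
    ∑ f ∈ s, (∑ a ∈ t with r f a, u a) * ∑ b ∈ t with r f b, v b =
      N • ∑ p ∈ t ×ˢ t with r p.1 p.2, u p.1 * v p.2 := by
  calc
    _ = ∑ f ∈ s, ∑ p ∈ t ×ˢ t with r f p.1 ∧ r f p.2, u p.1 * v p.2 := by
      simp only [Finset.sum_mul_sum, ← Finset.sum_product', Finset.filter_product]
    _ = ∑ p ∈ t ×ˢ t with r p.1 p.2, ∑ f ∈ s with r f p.1, u p.1 * v p.2 := by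
      refine Finset.sum_comm' fun f p ↦ ?_
      simp only [Finset.mem_filter]
      have : r f p.1 → (r f p.2 ↔ r p.1 p.2) := fun h ↦
        ⟨fun h' ↦ hr.trans (hr.symm h) h', fun h' ↦ hr.trans h h'⟩
      tauto
    _ = ∑ p ∈ t ×ˢ t with r p.1 p.2, N • (u p.1 * v p.2) :=
      Finset.sum_congr rfl fun p hp ↦ by
        rw [Finset.sum_const, hN _ (Finset.mem_product.1 (Finset.mem_filter.1 hp).1).1]
    _ = _ := (Finset.smul_sum ..).symm

/-- Expanding the square: a pair of related points is seen from each of the `N` elements of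
their common class. -/
lemma finsum_mem_finsum_mul_finsum_of_equivalence {α R : Type*} [NonUnitalNonAssocSemiring R]
    {r : α → α → Prop} (hr : Equivalence r) {s t : Set α} (hs : s.Finite) (ht : t.Finite)
    {N : ℕ} (hN : ∀ a ∈ t, {f ∈ s | r f a}.ncard = N) (u v : α → R) :
    ∑ᶠ f ∈ s, (∑ᶠ a ∈ {a ∈ t | r f a}, u a) * (∑ᶠ b ∈ {b ∈ t | r f b}, v b) =
      N • ∑ᶠ p ∈ {p : α × α | p.1 ∈ t ∧ p.2 ∈ t ∧ r p.1 p.2}, u p.1 * v p.2 := by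
  classical
  lift s to Finset α using hs
  lift t to Finset α using ht
  have hpairs : {p : α × α | p.1 ∈ (t : Set α) ∧ p.2 ∈ (t : Set α) ∧ r p.1 p.2} =
      ((t ×ˢ t).filter fun p ↦ r p.1 p.2 : Finset (α × α)) := by
    ext p
    simp [and_assoc]
  simp only [Finset.mem_coe, ← Finset.coe_filter, Set.ncard_coe_finset] at hN
  rw [hpairs]
  simp only [Finset.mem_coe, ← Finset.coe_filter, finsum_mem_finset_eq_sum]
  exact finset_sum_sum_mul_sum_of_equivalence hr hN u v

lemma finsum_mem_eq_card_units_nsmul {K α M : Type*} [GroupWithZero K] [Finite Kˣ]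
    [MulAction Kˣ α] [AddCommMonoid M] {S : Set α} (hS : S.Finite)
    (hS_smul : ∀ (c : Kˣ), ∀ a ∈ S, c • a ∈ S) {ℓ : α → K} (hℓ : ∀ a ∈ S, ℓ a ≠ 0)
    (hℓ_smul : ∀ (c : Kˣ) (a : α), ℓ (c • a) = c * ℓ a) {w : α → M}
    (hw : ∀ (c : Kˣ) (a : α), w (c • a) = w a) :
    ∑ᶠ a ∈ S, w a = Nat.card Kˣ • ∑ᶠ a ∈ {a ∈ S | ℓ a = 1}, w a := by
  have hS_eq : S = ⋃ c : Kˣ, {a ∈ S | ℓ a = c} := by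
    ext a
    simp only [Set.mem_iUnion, Set.mem_ofPred_eq, exists_and_left, iff_self_and]
    exact fun ha ↦ ⟨Units.mk0 (ℓ a) (hℓ a ha), rfl⟩
  have hdisj : Pairwise fun c d : Kˣ ↦ Disjoint {a ∈ S | ℓ a = c} {a ∈ S | ℓ a = d} :=
    fun c d hcd ↦ Set.disjoint_left.2 fun a hc hd ↦ hcd (Units.ext (hc.2.symm.trans hd.2))
  have hslice (c : Kˣ) : ∑ᶠ a ∈ {a ∈ S | ℓ a = c}, w a = ∑ᶠ a ∈ {a ∈ S | ℓ a = 1}, w a := by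
    refine finsum_mem_eq_of_bijOn (c⁻¹ • ·) (Set.InvOn.bijOn (f' := (c • ·))
      ⟨fun a _ ↦ smul_inv_smul c a, fun a _ ↦ inv_smul_smul c a⟩ ?_ ?_) fun a _ ↦ (hw _ a).symm
    · rintro a ⟨ha, hac⟩
      exact ⟨hS_smul _ a ha, by rw [hℓ_smul, hac, Units.inv_mul]⟩
    · rintro a ⟨ha, ha1⟩
      exact ⟨hS_smul c a ha, by rw [hℓ_smul, ha1, mul_one]⟩
  cases nonempty_fintype Kˣ
  calc
    _ = ∑ᶠ c : Kˣ, ∑ᶠ a ∈ {a ∈ S | ℓ a = c}, w a := by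
      conv_lhs => rw [hS_eq]
      exact finsum_mem_iUnion hdisj fun c ↦ hS.subset (Set.sep_subset _ _)
    _ = _ := by
      simp only [hslice, finsum_eq_sum_of_fintype, Finset.sum_const, Finset.card_univ,
        Nat.card_eq_fintype_card]

end Sums

section Counting

variable {R : Type*} [Ring R]

lemma equivalence_degree_sub_le (R : Type*) [Ring R] (d : WithBot ℕ) :
    Equivalence fun f g : R[X] ↦ (f - g).degree ≤ d where
  refl f := by simp
  symm {f g} hfg := by rwa [← neg_sub, degree_neg]
  trans {f g e} hfg hge := by
    rw [← sub_add_sub_cancel f g e]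
    exact (degree_add_le _ _).trans (max_le hfg hge)

lemma card_degreeLE [Finite R] (n : ℕ) :
    Nat.card (degreeLE R n) = Nat.card R ^ (n + 1) := by
  rw [← degreeLT_succ_eq_degreeLE, Nat.card_congr (degreeLTEquiv R (n + 1)).toEquiv, Nat.card_fun,
    Nat.card_fin]

lemma finite_natDegree_le [Finite R] (n : ℕ) : {f : R[X] | f.natDegree ≤ n}.Finite := by
  have : Finite (degreeLT R (n + 1)) := .of_equiv _ (degreeLTEquiv R (n + 1)).toEquiv.symm
  refine (Set.toFinite (degreeLT R (n + 1) : Set R[X])).subset fun f hf ↦ ?_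
  rw [SetLike.mem_coe, degreeLT_succ_eq_degreeLE, mem_degreeLE]
  exact natDegree_le_iff_degree_le.1 hf

lemma monic_of_degree_sub_lt {f g : R[X]} (hg : g.Monic) (hfg : (f - g).degree < g.degree) :
    f.Monic :=
  sub_add_cancel f g ▸ hg.add_of_right hfg

lemma natDegree_eq_of_degree_sub_lt {f g : R[X]} (hfg : (f - g).degree < g.degree) :
    f.natDegree = g.natDegree := by
  rw [← natDegree_add_eq_right_of_degree_lt hfg, sub_add_cancel]

lemma ncard_monic_degree_sub_le [Finite R] {n h : ℕ} (hhn : h < n) {g : R[X]} (hg : g.Monic)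
    (hgn : g.natDegree = n) :
    {f ∈ {f : R[X] | f.Monic ∧ f.natDegree = n} | (f - g).degree ≤ h}.ncard =
      Nat.card R ^ (h + 1) := by
  have hset : {f ∈ {f : R[X] | f.Monic ∧ f.natDegree = n} | (f - g).degree ≤ h} =
      (· + g) '' (degreeLE R h : Set R[X]) := by
    ext f
    constructor
    · exact fun hf ↦ ⟨f - g, mem_degreeLE.2 hf.2, sub_add_cancel f g⟩
    · rintro ⟨d, hd, rfl⟩
      have hdh : (d + g - g).degree ≤ h := (add_sub_cancel_right d g).symm ▸ mem_degreeLE.1 hd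
      have hlt : (d + g - g).degree < g.degree := hdh.trans_lt (coe_lt_degree.2 (hgn ▸ hhn))
      exact ⟨⟨monic_of_degree_sub_lt hg hlt, (natDegree_eq_of_degree_sub_lt hlt).trans hgn⟩, hdh⟩
  rw [hset, Set.ncard_image_of_injective _ (add_left_injective g), ← Nat.card_coe_set_eq,
    SetLike.coe_sort_coe, card_degreeLE]

end Counting

section Covariance

variable {F : Type*} [Field F]

/-- `P_n^♮`, the set of polynomials of degree `n`, with arbitrary leading coefficient, whose
constant term is nonzero. -/
def polySharp (F : Type*) [Field F] (n : ℕ) : Set F[X] :=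
  {f | f.natDegree = n ∧ f.coeff 0 ≠ 0}

/-- The sum of `u` over the short interval `{g ∈ M_n^♮ : deg (f - g) ≤ h}` around a polynomial `f`
of degree `n`; it is `Ψ̃_j^♮(f; h)` for `u = Λ̃_j^♮`. -/
noncomputable def sharpIntervalSum {M : Type*} [AddCommMonoid M] (u : F[X] → M) (f : F[X])
    (h : ℕ) : M :=
  ∑ᶠ g ∈ {g | g ∈ monicSharp F f.natDegree ∧ (f - g).degree ≤ (h : WithBot ℕ)}, u g

lemma psiSharp_eq_sharpIntervalSum (j : ℕ) (f : F[X]) (h : ℕ) :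
    psiSharp j f h = sharpIntervalSum (lamSharp j) f h :=
  rfl

lemma mem_monicSharp_iff {n : ℕ} {f : F[X]} : f ∈ monicSharp F n ↔ f ∈ polySharp F n ∧ f.Monic :=
  and_comm

lemma reverse_mem_polySharp {n : ℕ} {f : F[X]} (hf : f ∈ polySharp F n) :
    f.reverse ∈ polySharp F n :=
  ⟨(natDegree_reverse_of_coeff_zero_ne_zero hf.2).trans hf.1,
    coeff_zero_reverse_ne_zero (ne_zero_of_coeff_zero_ne_zero hf.2)⟩

lemma units_smul_mem_polySharp {n : ℕ} (c : Fˣ) {f : F[X]} (hf : f ∈ polySharp F n) :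
    c • f ∈ polySharp F n := by
  rw [Units.smul_def, smul_eq_C_mul]
  exact ⟨(natDegree_C_mul c.ne_zero).trans hf.1,
    coeff_C_mul f ▸ mul_ne_zero c.ne_zero hf.2⟩

lemma finite_polySharp [Finite F] (n : ℕ) : (polySharp F n).Finite :=
  (finite_natDegree_le n).subset fun _ hf ↦ hf.1.le

lemma IsReversalInvariant.units_smul {α : Type*} {u : F[X] → α} (hu : IsReversalInvariant u)
    (c : Fˣ) (f : F[X]) : u (c • f) = u f := by
  rw [Units.smul_def, smul_eq_C_mul]
  exact hu.associated (associated_C_mul_left c.ne_zero f)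

lemma finsum_sharpIntervalSum_mul [Finite F] {R : Type*} [NonUnitalNonAssocSemiring R]
    {n h : ℕ} (hhn : h < n) (u v : F[X] → R) :
    ∑ᶠ f ∈ {f : F[X] | f.Monic ∧ f.natDegree = n}, sharpIntervalSum u f h * sharpIntervalSum v f h =
      Nat.card F ^ (h + 1) • ∑ᶠ p ∈ {p : F[X] × F[X] |
        p.1 ∈ monicSharp F n ∧ p.2 ∈ monicSharp F n ∧ (p.1 - p.2).degree ≤ h}, u p.1 * v p.2 := by
  rw [← finsum_mem_finsum_mul_finsum_of_equivalence (equivalence_degree_sub_le F h)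
    ((finite_natDegree_le n).subset fun _ hf ↦ hf.2.le)
    ((finite_polySharp n).subset fun _ hf ↦ (mem_monicSharp_iff.1 hf).1)
    (fun g hg ↦ ncard_monic_degree_sub_le hhn hg.1 hg.2.1) u v]
  refine finsum_mem_congr rfl fun f hf ↦ ?_
  rw [sharpIntervalSum, sharpIntervalSum, hf.2]

lemma finsum_polySharp_pairs_eq_nsmul [Finite F] {R : Type*} [NonUnitalNonAssocSemiring R]
    {n h : ℕ} (hhn : h < n) {u v : F[X] → R} (hu : IsReversalInvariant u)
    (hv : IsReversalInvariant v) :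
    ∑ᶠ p ∈ {p : F[X] × F[X] |
        p.1 ∈ polySharp F n ∧ p.2 ∈ polySharp F n ∧ (p.1 - p.2).degree ≤ h}, u p.1 * v p.2 =
      (Nat.card F - 1) • ∑ᶠ p ∈ {p : F[X] × F[X] |
        p.1 ∈ monicSharp F n ∧ p.2 ∈ monicSharp F n ∧ (p.1 - p.2).degree ≤ h}, u p.1 * v p.2 := by
  have hmonic : {p : F[X] × F[X] |
        p.1 ∈ monicSharp F n ∧ p.2 ∈ monicSharp F n ∧ (p.1 - p.2).degree ≤ h} =
      {p ∈ {p : F[X] × F[X] | p.1 ∈ polySharp F n ∧ p.2 ∈ polySharp F n ∧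
        (p.1 - p.2).degree ≤ h} | p.1.leadingCoeff = 1} := by
    ext ⟨f, g⟩
    simp only [Set.mem_ofPred_eq, mem_monicSharp_iff]
    constructor
    · rintro ⟨⟨hf, hfm⟩, ⟨hg, -⟩, hfg⟩
      exact ⟨⟨hf, hg, hfg⟩, hfm⟩
    · rintro ⟨⟨hf, hg, hfg⟩, hfm⟩
      have hlt : (g - f).degree < f.degree := by
        rw [← neg_sub, degree_neg]
        exact hfg.trans_lt (coe_lt_degree.2 (hf.1.symm ▸ hhn))
      exact ⟨⟨hf, hfm⟩, ⟨hg, monic_of_degree_sub_lt hfm hlt⟩, hfg⟩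
  rw [hmonic, ← Nat.card_units]
  refine finsum_mem_eq_card_units_nsmul (ℓ := fun p : F[X] × F[X] ↦ p.1.leadingCoeff)
    (w := fun p ↦ u p.1 * v p.2) ?_ ?_ ?_ ?_ ?_
  · exact ((finite_polySharp n).prod (finite_polySharp n)).subset fun p hp ↦ ⟨hp.1, hp.2.1⟩
  · rintro c p ⟨hf, hg, hfg⟩
    refine ⟨units_smul_mem_polySharp c hf, units_smul_mem_polySharp c hg, ?_⟩
    rwa [Prod.smul_fst, Prod.smul_snd, ← smul_sub, Units.smul_def, smul_eq_C_mul,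
      degree_C_mul c.ne_zero]
  · exact fun p hp ↦ leadingCoeff_ne_zero.2 (ne_zero_of_coeff_zero_ne_zero hp.1.2)
  · intro c p
    rw [Prod.smul_fst, Units.smul_def, smul_eq_C_mul, leadingCoeff_mul, leadingCoeff_C]
  · intro c p
    rw [Prod.smul_fst, Prod.smul_snd, hu.units_smul, hv.units_smul]

lemma finsum_polySharp_pairs_X_pow_dvd_eq {R : Type*} [NonUnitalNonAssocSemiring R] (n h : ℕ)
    {u v : F[X] → R} (hu : IsReversalInvariant u) (hv : IsReversalInvariant v) :
    ∑ᶠ p ∈ {p : F[X] × F[X] |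
        p.1 ∈ polySharp F n ∧ p.2 ∈ polySharp F n ∧ X ^ (n - h) ∣ p.1 - p.2}, u p.1 * v p.2 =
      ∑ᶠ p ∈ {p : F[X] × F[X] |
        p.1 ∈ polySharp F n ∧ p.2 ∈ polySharp F n ∧ (p.1 - p.2).degree ≤ h}, u p.1 * v p.2 := by
  have hinv (s : F[X] → F[X] → Prop) : Set.LeftInvOn (Prod.map reverse reverse)
      (Prod.map reverse reverse) {p | p.1 ∈ polySharp F n ∧ p.2 ∈ polySharp F n ∧ s p.1 p.2} :=
    fun p hp ↦ Prod.ext (reverse_reverse_of_coeff_zero_ne_zero hp.1.2)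
      (reverse_reverse_of_coeff_zero_ne_zero hp.2.1.2)
  refine finsum_mem_eq_of_bijOn (Prod.map reverse reverse)
    (Set.InvOn.bijOn (f' := Prod.map reverse reverse) ⟨hinv fun f g ↦ X ^ (n - h) ∣ f - g,
      hinv fun f g ↦ (f - g).degree ≤ h⟩ ?_ ?_) ?_
  · rintro ⟨f, g⟩ ⟨hf, hg, hfg⟩
    have hf' := reverse_mem_polySharp hf
    have hg' := reverse_mem_polySharp hg
    refine ⟨hf', hg', (X_pow_sub_dvd_reverse_sub_reverse_iff hf'.1 hg'.1 h).1 ?_⟩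
    rwa [reverse_reverse_of_coeff_zero_ne_zero hf.2, reverse_reverse_of_coeff_zero_ne_zero hg.2]
  · rintro ⟨f, g⟩ ⟨hf, hg, hfg⟩
    exact ⟨reverse_mem_polySharp hf, reverse_mem_polySharp hg,
      (X_pow_sub_dvd_reverse_sub_reverse_iff hf.1 hg.1 h).2 hfg⟩
  · rintro ⟨f, g⟩ ⟨hf, hg, -⟩
    exact congrArg₂ (· * ·) (hu.reverse hf.2).symm (hv.reverse hg.2).symm

theorem sum_psiSharp_eq_general [Fintype F] {K : Type*} [DivisionRing K] [CharZero K] {n h : ℕ}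
    (hhn : h < n) {u v : F[X] → K} (hu : IsReversalInvariant u) (hv : IsReversalInvariant v) :
    ∑ᶠ f ∈ {f : F[X] | f.Monic ∧ f.natDegree = n}, sharpIntervalSum u f h * sharpIntervalSum v f h =
      ((Fintype.card F : K) ^ (h + 1) / ((Fintype.card F : K) - 1)) *
        ∑ᶠ p ∈ {p : F[X] × F[X] |
          p.1 ∈ polySharp F n ∧ p.2 ∈ polySharp F n ∧ X ^ (n - h) ∣ p.1 - p.2}, u p.1 * v p.2 := by
  have hq : (Fintype.card F : K) - 1 ≠ 0 :=
    sub_ne_zero.2 (Nat.cast_ne_one.2 Fintype.one_lt_card.ne')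
  rw [finsum_polySharp_pairs_X_pow_dvd_eq n h hu hv, finsum_polySharp_pairs_eq_nsmul hhn hu hv,
    finsum_sharpIntervalSum_mul hhn, Nat.card_eq_fintype_card, nsmul_eq_mul, nsmul_eq_mul,
    Nat.cast_sub Fintype.card_pos, Nat.cast_one, Nat.cast_pow, ← mul_assoc, div_mul_cancel₀ _ hq]

end Covariance

/-- Step 1 (equation (3.2)) in the proof of Theorem 1.4 of Rodgers,
"The covariance of almost-primes in F_q[T]":
`Σ_{f ∈ M_n} Ψ̃_j^♮(f;h) Ψ̃_k^♮(f;h)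
  = (q^{h+1}/(q−1)) Σ_{g₁,g₂ ∈ P_n^♮, g₁ ≡ g₂ (T^{n−h})} Λ̃_j^♮(g₁) Λ̃_k^♮(g₂)`. -/
theorem sum_psiSharp_eq (F : Type*) [Field F] [Fintype F] (j k n h : ℕ)
    (hj : 1 ≤ j) (hk : 1 ≤ k) (hh : h < n) :
    (∑ᶠ f ∈ {f : F[X] | f.Monic ∧ f.natDegree = n}, psiSharp j f h * psiSharp k f h)
      = ((Fintype.card F : ℝ) ^ (h + 1) / ((Fintype.card F : ℝ) - 1)) *
          ∑ᶠ p ∈ {p : F[X] × F[X] |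
              p.1.natDegree = n ∧ p.1.coeff 0 ≠ 0 ∧ p.2.natDegree = n ∧ p.2.coeff 0 ≠ 0 ∧
              (X : F[X]) ^ (n - h) ∣ (p.1 - p.2)},
            lamSharp j p.1 * lamSharp k p.2 := by
  simpa only [psiSharp_eq_sharpIntervalSum, polySharp, Set.mem_ofPred_eq, and_assoc] using
    sum_psiSharp_eq_general hh (isReversalInvariant_lamSharp (F := F) j)
      (isReversalInvariant_lamSharp k)
end
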